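/- Let (ν, δ) be a universal pair over ℕ. Then (11, η(ν, δ)) is a universal pair over ℤ, where η(ν, δ) = 15616 + 233856·δ + 233952·δ·(2δ + 1)^{ν+1} + 467712·δ²·(2δ + 1)^{ν+1}. -/

import Mathlib

/-- A set `𝒜 ⊆ ℕ` is Diophantine if there are `ν ∈ ℕ` and a polynomial
`P ∈ ℤ[X₀, …, X_ν]` such that `a ∈ 𝒜 ↔ ∃ z ∈ ℕ^ν, P(a, z) = 0`. -/
def IsDiophantine (A : Set ℕ) : Prop :=
  ∃ (ν : ℕ) (P : MvPolynomial (Fin (ν + 1)) ℤ),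
    ∀ a : ℕ, a ∈ A ↔ ∃ z : Fin ν → ℕ,
      MvPolynomial.eval (Fin.cons (a : ℤ) (fun i => (z i : ℤ))) P = 0

/-- `(ν, δ)` is a universal pair over `ℕ`: every Diophantine set is represented
by a polynomial with `ν` unknowns ranging over `ℕ` and total degree `≤ δ`. -/
def IsUniversalPairNat (ν δ : ℕ) : Prop :=
  ∀ A : Set ℕ, IsDiophantine A →
    ∃ P : MvPolynomial (Fin (ν + 1)) ℤ, P.totalDegree ≤ δ ∧
      ∀ a : ℕ, a ∈ A ↔ ∃ z : Fin ν → ℕ,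
        MvPolynomial.eval (Fin.cons (a : ℤ) (fun i => (z i : ℤ))) P = 0

/-- `(ν, δ)` is a universal pair over `ℤ`: every Diophantine set is represented
by a polynomial with `ν` unknowns ranging over `ℤ` and total degree `≤ δ`. -/
def IsUniversalPairInt (ν δ : ℕ) : Prop :=
  ∀ A : Set ℕ, IsDiophantine A →
    ∃ P : MvPolynomial (Fin (ν + 1)) ℤ, P.totalDegree ≤ δ ∧
      ∀ a : ℕ, a ∈ A ↔ ∃ z : Fin ν → ℤ,
        MvPolynomial.eval (Fin.cons (a : ℤ) z) P = 0

/-!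
Let `P` be a polynomial of total degree at most `δ` in a parameter and `ν` unknowns that range over
the natural numbers. The unknowns are the digits, at positions growing like powers of `δ + 1`, of a
single number `g` in a large base that is a power of two. A product of a power of a linear
expression in `g` with the value of a fixed polynomial depending on `P` then has the value of `P`
as one of its signed digits. That this digit vanishes, and that `g` has small digits at the
prescribed positions and zeros elsewhere, is one statement about two numbers having no binary digit
`1` in common. By Kummer's theorem this amounts to a divisibility of a central binomial coefficient
`C(2X, X)` by a power of two.

Pell equations turn this divisibility into Diophantine conditions over `ℤ`: the coefficient is
approximated by a quotient of two terms of their solution sequences, and that numbers are such terms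
is expressed by two squares and one divisibility. All inequalities needed are
gathered into the positivity of one integer. The relation-combining polynomial of Matiyasevich and
Robinson replaces two squares, a divisibility and a positivity by one equation with one further
natural unknown `n`, and every natural number is of the form `x² + y² + z² + z` with integers
`x`, `y`, `z`. The eight unknowns of the system and these three make eleven.
-/

namespace UniversalPair

/-! ### Sums of three squares -/

lemma exists_abs_two_mul_add_mul_le {A : ℤ} (hA : 0 < A) (B : ℤ) :
    ∃ k : ℤ, |2 * (B + k * A)| ≤ A := by
  refine ⟨-((2 * B + A) / (2 * A)), abs_le.mpr ?_⟩
  have hdiv := Int.mul_ediv_add_emod (2 * B + A) (2 * A)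
  have hnonneg := Int.emod_nonneg (2 * B + A) (by lia : 2 * A ≠ 0)
  have hlt := Int.emod_lt_of_pos (2 * B + A) (by lia : 0 < 2 * A)
  constructor <;> linarith

/-- The integral binary quadratic form `A p² + 2 B p q + C q²`. -/
def binaryForm (A B C p q : ℤ) : ℤ := A * p ^ 2 + 2 * B * p * q + C * q ^ 2

lemma exists_binaryForm_sq_le {A B C : ℤ} (hA : 0 < A) (hdet : 0 < A * C - B ^ 2) :
    ∃ p q r s : ℤ, p * s - q * r = 1 ∧ 0 < binaryForm A B C p q ∧
      3 * binaryForm A B C p q ^ 2 ≤ 4 * (A * C - B ^ 2) := by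
  by_cases hred : 3 * A ^ 2 ≤ 4 * (A * C - B ^ 2)
  · exact ⟨1, 0, 0, 1, by ring, by simpa [binaryForm], by simpa [binaryForm]⟩
  push Not at hred
  obtain ⟨k, hk⟩ := exists_abs_two_mul_add_mul_le hA B
  set B' := B + k * A with hB'
  set C' := C + 2 * k * B + k ^ 2 * A with hC'
  have hdet' : A * C' - B' ^ 2 = A * C - B ^ 2 := by rw [hB', hC']; ring
  have hB'sq : 4 * B' ^ 2 ≤ A ^ 2 := by
    have := sq_le_sq' (abs_le.mp hk).1 (abs_le.mp hk).2
    linarith [mul_pow 2 B' 2]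
  have hC'pos : 0 < C' := pos_of_mul_pos_right (by linarith [sq_nonneg B'] : 0 < A * C') hA.le
  have : C' < A := lt_of_mul_lt_mul_left (by nlinarith : A * C' < A * A) hA.le
  obtain ⟨p, q, r, s, hunit, hpos, hle⟩ :=
    exists_binaryForm_sq_le (A := C') (B := -B') (C := A) hC'pos (by linarith [hdet'])
  have hform : binaryForm A B C (-q + k * p) p = binaryForm C' (-B') A p q := by
    rw [binaryForm, binaryForm, hB', hC']; ring
  refine ⟨-q + k * p, p, -s + k * r, r, by linear_combination hunit, hform ▸ hpos, ?_⟩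
  rw [hform]
  linarith
termination_by A.toNat

/-- An integral ternary quadratic form `a x² + b y² + c z² + 2 d x y + 2 e x z + 2 f y z`, given by
the entries of its Gram matrix. -/
structure TernaryForm where
  (a b c d e f : ℤ)

namespace TernaryForm

/-- The value of a ternary form at `(x, y, z)`. -/
def eval (F : TernaryForm) (x y z : ℤ) : ℤ :=
  F.a * x ^ 2 + F.b * y ^ 2 + F.c * z ^ 2 + 2 * F.d * x * y + 2 * F.e * x * z + 2 * F.f * y * z

/-- The leading `2 × 2` minor of the Gram matrix. -/
def minor (F : TernaryForm) : ℤ := F.a * F.b - F.d ^ 2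

/-- The determinant of the Gram matrix. -/
def det (F : TernaryForm) : ℤ :=
  F.a * F.b * F.c + 2 * F.d * F.e * F.f - F.a * F.f ^ 2 - F.b * F.e ^ 2 - F.c * F.d ^ 2

-- The lower right `2 × 2` block of the adjugate is a binary form of determinant `F.a * F.det`:
-- reduce it by acting on `(y, z)`, then shift `x` by a multiple of `y`.
lemma exists_reduced (F : TernaryForm) (ha : 0 < F.a) (hminor : 0 < F.minor) (hdet : 0 < F.det) :
    ∃ G : TernaryForm, G.a = F.a ∧ G.det = F.det ∧ |2 * G.d| ≤ G.a ∧ 0 < G.minor ∧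
      3 * G.minor ^ 2 ≤ 4 * (G.a * G.det) ∧
      ∀ x y z, ∃ x' y' z', F.eval x y z = G.eval x' y' z' := by
  obtain ⟨a, b, c, d, e, f⟩ := F
  simp only [minor, det] at ha hminor hdet ⊢
  have hadj : (a * b - d ^ 2) * (a * c - e ^ 2) - (a * f - d * e) ^ 2
      = a * (a * b * c + 2 * d * e * f - a * f ^ 2 - b * e ^ 2 - c * d ^ 2) := by ring
  obtain ⟨p, q, r, s, hunit, hpos, hle⟩ := exists_binaryForm_sq_le
    (B := a * f - d * e) hminor (hadj ▸ mul_pos ha hdet)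
  obtain ⟨k, hk⟩ := exists_abs_two_mul_add_mul_le ha (p * d + q * e)
  let G : TernaryForm :=
    ⟨a, binaryForm b f c p q + 2 * k * (p * d + q * e) + k ^ 2 * a, binaryForm b f c r s,
      p * d + q * e + k * a, r * d + s * e,
      b * p * r + f * (p * s + q * r) + c * q * s + k * (r * d + s * e)⟩
  have hGminor : G.minor = binaryForm (a * b - d ^ 2) (a * f - d * e) (a * c - e ^ 2) p q := by
    simp only [G, minor, binaryForm]; ring
  have hGdet : G.det = (mk a b c d e f).det * (p * s - q * r) ^ 2 := by
    simp only [G, det, binaryForm]; ring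
  have hGeval (x y z : ℤ) :
      G.eval x y z = (mk a b c d e f).eval (x + k * y) (p * y + r * z) (q * y + s * z) := by
    simp only [G, eval, binaryForm]; ring
  rw [hunit, one_pow, mul_one] at hGdet
  refine ⟨G, rfl, hGdet, hk, hpos.trans_eq hGminor.symm, ?_, fun x y z ↦
    ⟨x - k * (s * y - r * z), s * y - r * z, -q * y + p * z, ?_⟩⟩
  · change 3 * G.minor ^ 2 ≤ 4 * (a * G.det)
    rw [hGminor, hGdet]
    exact hle.trans_eq (by rw [hadj, det])
  · rw [hGeval]
    congr 1 <;> linarith [congrArg (y * ·) hunit, congrArg (z * ·) hunit]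

lemma exists_eval_eq_of_reduced (F : TernaryForm) (ha : 0 < F.a) (hd : |2 * F.d| ≤ F.a)
    (hminor : 3 * F.minor ^ 2 ≤ 4 * F.a) (hdet : F.det = 1) (hab : F.a ≤ F.b) (x y z : ℤ) :
    ∃ u v w : ℤ, F.eval x y z = u ^ 2 + v ^ 2 + w ^ 2 := by
  obtain ⟨a, b, c, d, e, f⟩ := F
  simp only [minor, det, eval] at *
  have hd' : 4 * d ^ 2 ≤ a ^ 2 := by
    have := sq_le_sq' (abs_le.mp hd).1 (abs_le.mp hd).2
    linarith [mul_pow 2 d 2]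
  have hminor_ge : 3 * a ^ 2 ≤ 4 * (a * b - d ^ 2) := by
    linarith [pow_two a, mul_le_mul_of_nonneg_left hab ha.le]
  have hquartic : 27 * a ^ 4 ≤ 64 * a := by
    have := pow_le_pow_left₀ (by positivity) hminor_ge 2
    linarith [mul_pow 3 (a ^ 2) 2, pow_mul a 2 2, mul_pow 4 (a * b - d ^ 2) 2]
  obtain rfl : a = 1 := by
    by_contra hne
    have hcube : (2 : ℤ) ^ 3 ≤ a ^ 3 := by gcongr; lia
    nlinarith
  obtain rfl : d = 0 := by
    rw [abs_le] at hd
    lia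
  obtain rfl : b = 1 := by nlinarith
  exact ⟨x + e * z, y + f * z, z, by linear_combination z ^ 2 * hdet⟩

lemma exists_eval_eq_sum_three_sq (F : TernaryForm) (ha : 0 < F.a) (hminor : 0 < F.minor)
    (hdet : F.det = 1) (x y z : ℤ) : ∃ u v w : ℤ, F.eval x y z = u ^ 2 + v ^ 2 + w ^ 2 := by
  obtain ⟨G, haG, hdetG, hdG, hposG, hleG, hrep⟩ :=
    F.exists_reduced ha hminor (hdet ▸ one_pos)
  rw [hdet] at hdetG
  rw [hdetG, mul_one] at hleG
  obtain ⟨x', y', z', heq⟩ := hrep x y z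
  rw [heq]
  rcases le_or_gt G.a G.b with hab | hba
  · exact G.exists_eval_eq_of_reduced (haG ▸ ha) hdG hleG hdetG hab x' y' z'
  · obtain ⟨u, v, w, huvw⟩ := (mk G.b G.a G.c G.d G.f G.e).exists_eval_eq_sum_three_sq
      (pos_of_mul_pos_right (by rw [minor] at hposG; linarith [sq_nonneg G.d] : 0 < G.a * G.b)
        (haG ▸ ha.le))
      (by rw [minor] at hposG ⊢; linarith [mul_comm G.a G.b])
      (by rw [← hdetG, det, det]; ring) y' x' z'
    exact ⟨u, v, w, by rw [← huvw, eval, eval]; ring⟩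
termination_by F.a.toNat

end TernaryForm

lemma exists_sum_three_sq_of_dvd {n d s : ℤ} (hd : 0 < d) (hn : 1 < d * n)
    (hdvd : d * n - 1 ∣ s ^ 2 + d) : ∃ u v w : ℤ, n = u ^ 2 + v ^ 2 + w ^ 2 := by
  obtain ⟨a, ha⟩ := hdvd
  have hapos : 0 < a :=
    pos_of_mul_pos_right (by rw [← ha]; positivity : 0 < (d * n - 1) * a) (by linarith)
  set F : TernaryForm := ⟨a, d * n - 1, n, s, 1, 0⟩ with hF
  have hminor : F.minor = d := by rw [hF, TernaryForm.minor]; linear_combination -ha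
  have hdet : F.det = 1 := by
    rw [TernaryForm.minor] at hminor
    rw [TernaryForm.det]
    linear_combination n * hminor
  simpa [hF, TernaryForm.eval] using
    F.exists_eval_eq_sum_three_sq hapos (hd.trans_eq hminor.symm) hdet 0 0 1

lemma exists_prime_two_mul_add_one {n : ℕ} (hn : n % 4 = 1) :
    ∃ d p : ℕ, d % 8 = 3 ∧ p.Prime ∧ p ≠ 2 ∧ d * n = 2 * p + 1 := by
  obtain ⟨t, rfl⟩ : ∃ t, n = 4 * t + 1 := ⟨n / 4, by lia⟩
  have hcop : (6 * t + 1).Coprime (4 * (4 * t + 1)) := by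
    refine .mul_right ?_ ?_
    · exact .pow_right 2 (m := 2) (Nat.coprime_two_right.mpr ⟨3 * t, by ring⟩)
    · exact Nat.isCoprime_iff_coprime.mp ⟨-2, 3, by push_cast; ring⟩
  obtain ⟨p, hgt, hp, hmod⟩ :=
    Nat.forall_exists_prime_gt_and_modEq (6 * t + 2) (by lia) hcop
  obtain ⟨m, hm⟩ := (Nat.modEq_iff_dvd' (by lia)).mp hmod.symm
  have hp_eq : p = 4 * (4 * t + 1) * m + (6 * t + 1) := by lia
  exact ⟨8 * m + 3, p, by lia, hp, by lia, by rw [hp_eq]; ring⟩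

open NumberTheorySymbols in
lemma jacobiSym_neg_eq_one {d n p : ℕ} (hd : d % 8 = 3) (hp : Odd p) (hdn : d * n = 2 * p + 1) :
    J(-(d : ℤ) | p) = 1 := by
  have hdodd : Odd d := Nat.odd_iff.mpr (by lia)
  have htwo : J(2 | d) = -1 := by
    rw [jacobiSym.at_two hdodd, ZMod.χ₈_nat_eq_if_mod_eight]
    simp [hd, Nat.odd_iff.mp hdodd]
  have hneg : J(-1 | d) = -1 := by
    rw [jacobiSym.at_neg_one hdodd, ZMod.χ₄_nat_three_mod_four (by lia)]
  have hpd : J(p | d) = 1 := by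
    have hmod : J(2 * p | d) = J(-1 | d) :=
      jacobiSym.mod_left' (Int.modEq_iff_dvd.mpr ⟨-n, by push_cast [← Int.natCast_inj] at hdn; lia⟩)
    rw [jacobiSym.mul_left, htwo, hneg] at hmod
    linarith
  rw [jacobiSym.neg _ hp]
  rcases Nat.odd_mod_four_iff.mp (Nat.odd_iff.mp hp) with h | h
  · rw [ZMod.χ₄_nat_one_mod_four h, jacobiSym.quadratic_reciprocity_one_mod_four' hdodd h, hpd,
      one_mul]
  · rw [ZMod.χ₄_nat_three_mod_four h,
      jacobiSym.quadratic_reciprocity_three_mod_four (by lia) h, hpd, neg_one_mul, neg_neg]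

lemma exists_two_mul_dvd_sq_add {d p : ℕ} (hd : Odd d) (hp : Odd p)
    (hsq : IsSquare ((-d : ℤ) : ZMod p)) : ∃ s : ℤ, (2 * p : ℤ) ∣ s ^ 2 + d := by
  have : NeZero p := ⟨hp.pos.ne'⟩
  obtain ⟨r, hr⟩ := hsq
  have hdvd : (p : ℤ) ∣ (r.val : ℤ) ^ 2 + d := by
    rw [← ZMod.intCast_zmod_eq_zero_iff_dvd]
    push_cast at hr ⊢
    rw [ZMod.natCast_zmod_val]
    linear_combination -hr
  obtain ⟨s, hs, hsodd⟩ : ∃ s : ℤ, (p : ℤ) ∣ s ^ 2 + d ∧ Odd s := by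
    rcases Int.even_or_odd (r.val : ℤ) with heven | hodd
    · refine ⟨r.val + p, ?_, heven.add_odd (mod_cast hp)⟩
      rw [show ((r.val : ℤ) + p) ^ 2 + d = (r.val ^ 2 + d) + p * (2 * r.val + p) by ring]
      exact dvd_add hdvd (dvd_mul_right _ _)
    · exact ⟨r.val, hdvd, hodd⟩
  have hcop : IsCoprime (2 : ℤ) p :=
    Nat.isCoprime_iff_coprime.mpr (Nat.coprime_two_left.mpr hp)
  exact ⟨s, hcop.mul_dvd ((hsodd.pow.add_odd (mod_cast hd)).two_dvd) hs⟩

lemma exists_sum_three_sq_of_mod_four_eq_one {n : ℕ} (hn : n % 4 = 1) :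
    ∃ u v w : ℤ, (n : ℤ) = u ^ 2 + v ^ 2 + w ^ 2 := by
  obtain ⟨d, p, hd, hp, hp2, hdn⟩ := exists_prime_two_mul_add_one hn
  have := Fact.mk hp
  have hpodd : Odd p := hp.odd_of_ne_two hp2
  obtain ⟨s, hs⟩ := exists_two_mul_dvd_sq_add (Nat.odd_iff.mpr (by lia)) hpodd
    (ZMod.isSquare_of_jacobiSym_eq_one (jacobiSym_neg_eq_one hd hpodd hdn))
  have hdn' : (d * n : ℤ) = 2 * p + 1 := mod_cast hdn
  have hp_pos : (0 : ℤ) < p := mod_cast hp.pos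
  exact exists_sum_three_sq_of_dvd (d := d) (by lia) (by linarith)
    (by rwa [hdn', add_sub_cancel_right])

theorem exists_eq_sum_three_sq_add_self (n : ℕ) :
    ∃ x y z : ℤ, (n : ℤ) = x ^ 2 + y ^ 2 + z ^ 2 + z := by
  obtain ⟨u, v, w, h⟩ := exists_sum_three_sq_of_mod_four_eq_one (n := 4 * n + 1) (by lia)
  push_cast at h
  have of_even_even {u v w : ℤ} (h : 4 * (n : ℤ) + 1 = u ^ 2 + v ^ 2 + w ^ 2) (hu : Even u)
      (hv : Even v) (hw : Odd w) : ∃ x y z : ℤ, (n : ℤ) = x ^ 2 + y ^ 2 + z ^ 2 + z := by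
    obtain ⟨x, rfl⟩ := hu.two_dvd
    obtain ⟨y, rfl⟩ := hv.two_dvd
    obtain ⟨z, rfl⟩ := hw
    exact ⟨x, y, z, by linarith⟩
  have sq_mod_four (u : ℤ) : (Even u ∧ u ^ 2 % 4 = 0) ∨ (Odd u ∧ u ^ 2 % 4 = 1) := by
    rcases Int.even_or_odd u with hu | hu
    · exact .inl ⟨hu, Int.emod_eq_zero_of_dvd (pow_dvd_pow_of_dvd hu.two_dvd 2)⟩
    · exact .inr ⟨hu, Int.sq_mod_four_eq_one_of_odd hu⟩
  rcases sq_mod_four u with ⟨hu, hu4⟩ | ⟨hu, hu4⟩ <;>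
    rcases sq_mod_four v with ⟨hv, hv4⟩ | ⟨hv, hv4⟩ <;>
    rcases sq_mod_four w with ⟨hw, hw4⟩ | ⟨hw, hw4⟩ <;> try lia
  · exact of_even_even h hu hv hw
  · exact of_even_even (by linarith) hu hw hv
  · exact of_even_even (by linarith) hv hw hu

/-! ### Combining two squares, a divisibility and a sign -/

lemma isSquare_of_sq_mul_eq_sq {m A t : ℤ} (hm : m ≠ 0) (h : m ^ 2 * A = t ^ 2) : IsSquare A := by
  obtain ⟨c, rfl⟩ := (Int.pow_dvd_pow_iff two_ne_zero).mp ⟨A, h.symm⟩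
  exact ⟨c, mul_left_cancel₀ (pow_ne_zero 2 hm) (by rw [h]; ring)⟩

/-- A quantity exceeding `√|A₁|` and `√|A₂|`, used as the base in which the two square roots are
combined into the single number `√A₁ + √A₂ * combWeight A₁ A₂`. -/
def combWeight (A₁ A₂ : ℤ) : ℤ := 1 + A₁ ^ 2 + A₂ ^ 2

/-- The factor `S² (2R - 1)`; its sign is the sign of the assertion `0 < R`. -/
def combScale (R S : ℤ) : ℤ := S ^ 2 * (2 * R - 1)

/-- The number which has to equal `combScale R S * (±√A₁ ± √A₂ * combWeight A₁ A₂)`. -/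
def combRoot (A₁ A₂ R S T n : ℤ) : ℤ :=
  S ^ 2 * n + T ^ 2 - combScale R S * (T ^ 2 + combWeight A₁ A₂ ^ 2)

/-- The relation-combining polynomial of Matiyasevich and Robinson: for `S ≠ 0` it has a root
`n ∈ ℕ` if and only if `A₁` and `A₂` are squares, `S ∣ T` and `0 < R`. -/
def combPoly (A₁ A₂ R S T n : ℤ) : ℤ :=
  combRoot A₁ A₂ R S T n ^ 4
    - 2 * combRoot A₁ A₂ R S T n ^ 2 * (combScale R S ^ 2 * (A₁ + combWeight A₁ A₂ ^ 2 * A₂))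
    + (combScale R S ^ 2 * (A₁ - combWeight A₁ A₂ ^ 2 * A₂)) ^ 2

lemma combWeight_pos (A₁ A₂ : ℤ) : 0 < combWeight A₁ A₂ := by unfold combWeight; positivity

lemma combScale_ne_zero (R : ℤ) {S : ℤ} (hS : S ≠ 0) : combScale R S ≠ 0 :=
  mul_ne_zero (pow_ne_zero 2 hS) (by lia)

lemma eq_zero_of_eq_combWeight_sq_mul {A₁ A₂ : ℤ} (h : A₁ = combWeight A₁ A₂ ^ 2 * A₂) :
    A₁ = 0 ∧ A₂ = 0 := by
  have hlt : |A₁| < combWeight A₁ A₂ := by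
    have := Int.natAbs_le_self_sq A₁
    rw [combWeight]
    linarith [Int.natCast_natAbs A₁, sq_nonneg A₂]
  have habs : |A₁| = combWeight A₁ A₂ ^ 2 * |A₂| := by
    conv_lhs => rw [h]
    rw [abs_mul, abs_of_pos (pow_pos (combWeight_pos A₁ A₂) 2)]
  have hA₂ : A₂ = 0 := by
    by_contra hne
    nlinarith [Int.one_le_abs hne, combWeight_pos A₁ A₂]
  exact ⟨by simpa [hA₂] using h, hA₂⟩

lemma isSquare_of_combPoly_eq_zero {A₁ A₂ R S T n : ℤ} (hS : S ≠ 0)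
    (h : combPoly A₁ A₂ R S T n = 0) : IsSquare A₁ ∧ IsSquare A₂ := by
  have hQ := combScale_ne_zero R hS
  have hX := (combWeight_pos A₁ A₂).ne'
  rw [combPoly] at h
  set Q := combScale R S
  set z := combRoot A₁ A₂ R S T n
  by_cases hz : z = 0
  · have hdiff : A₁ - combWeight A₁ A₂ ^ 2 * A₂ = 0 := by simpa [hz, hQ] using h
    obtain ⟨rfl, rfl⟩ := eq_zero_of_eq_combWeight_sq_mul (sub_eq_zero.mp hdiff)
    simp
  · have h2z : 2 * z ≠ 0 := mul_ne_zero two_ne_zero hz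
    exact ⟨isSquare_of_sq_mul_eq_sq (m := 2 * z * Q)
        (t := z ^ 2 + Q ^ 2 * (A₁ - combWeight A₁ A₂ ^ 2 * A₂))
        (mul_ne_zero h2z hQ) (by linear_combination -h),
      isSquare_of_sq_mul_eq_sq (m := 2 * z * (Q * combWeight A₁ A₂))
        (t := z ^ 2 - Q ^ 2 * (A₁ - combWeight A₁ A₂ ^ 2 * A₂))
        (mul_ne_zero h2z (mul_ne_zero hQ hX)) (by linear_combination -h)⟩

lemma combPoly_mul_self (s₁ s₂ R S T n : ℤ) :
    combPoly (s₁ * s₁) (s₂ * s₂) R S T n =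
      let z := combRoot (s₁ * s₁) (s₂ * s₂) R S T n
      let X := combWeight (s₁ * s₁) (s₂ * s₂)
      let Q := combScale R S
      (z - Q * (s₁ + s₂ * X)) * (z - Q * (-s₁ + s₂ * X)) * (z - Q * (s₁ + -s₂ * X)) *
        (z - Q * (-s₁ + -s₂ * X)) := by
  rw [combPoly]; ring

lemma combWeight_mul_self_sq_add_pos {s₁ s₂ e₁ e₂ : ℤ} (h₁ : |e₁| = |s₁|) (h₂ : |e₂| = |s₂|) :
    0 < combWeight (s₁ * s₁) (s₂ * s₂) ^ 2 + (e₁ + e₂ * combWeight (s₁ * s₁) (s₂ * s₂)) := by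
  have neg_sq_le {s e : ℤ} (h : |e| = |s|) : -(s * s) ^ 2 ≤ e := by
    rw [← abs_mul_abs_self s, ← h, abs_mul_abs_self]
    nlinarith [Int.natAbs_le_self_sq e, Int.natAbs_le_self_sq (e * e), neg_abs_le e,
      Int.natCast_natAbs e, Int.natCast_natAbs (e * e), abs_mul_self e]
  have hX : 1 ≤ combWeight (s₁ * s₁) (s₂ * s₂) := combWeight_pos _ _
  have hsum : combWeight (s₁ * s₁) (s₂ * s₂) = 1 + (s₁ * s₁) ^ 2 + (s₂ * s₂) ^ 2 := rfl
  nlinarith [neg_sq_le h₁, neg_sq_le h₂, sq_nonneg (s₁ * s₁)]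

lemma dvd_and_pos_of_combRoot_eq {A₁ A₂ R S T n W : ℤ} (hS : S ≠ 0) (hn : 0 ≤ n)
    (hW : 0 < combWeight A₁ A₂ ^ 2 + W) (h : combRoot A₁ A₂ R S T n = combScale R S * W) :
    S ∣ T ∧ 0 < R := by
  have hT : T ^ 2 = S ^ 2 * ((2 * R - 1) * (T ^ 2 + (combWeight A₁ A₂ ^ 2 + W)) - n) := by
    rw [combRoot, combScale] at h
    linear_combination h
  refine ⟨(Int.pow_dvd_pow_iff two_ne_zero).mp ⟨_, hT⟩, ?_⟩
  by_contra hR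
  have hneg : (2 * R - 1) * (T ^ 2 + (combWeight A₁ A₂ ^ 2 + W)) < 0 :=
    mul_neg_of_neg_of_pos (by lia) (by positivity)
  have := mul_neg_of_pos_of_neg (by positivity : 0 < S ^ 2) (sub_neg_of_lt (hneg.trans_le hn))
  linarith [sq_nonneg T]

lemma exists_combPoly_mul_self_eq_zero (s₁ s₂ c : ℤ) {R S : ℤ} (hS : S ≠ 0) (hR : 0 < R) :
    ∃ n : ℕ, combPoly (s₁ * s₁) (s₂ * s₂) R S (S * c) n = 0 := by
  set X := combWeight (s₁ * s₁) (s₂ * s₂) with hX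
  set N := (2 * R - 1) * ((S * c) ^ 2 + (X ^ 2 + (s₁ + s₂ * X))) - c ^ 2 with hN
  have hN_nonneg : 0 ≤ N := by
    have hW : 0 < X ^ 2 + (s₁ + s₂ * X) := combWeight_mul_self_sq_add_pos rfl rfl
    have hc : c ^ 2 ≤ (S * c) ^ 2 := by
      rw [mul_pow]
      exact le_mul_of_one_le_left (sq_nonneg c) (by positivity : 0 < S ^ 2)
    rw [hN]
    nlinarith [sq_nonneg (S * c)]
  refine ⟨N.toNat, ?_⟩
  rw [Int.toNat_of_nonneg hN_nonneg, combPoly_mul_self]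
  have hroot : combRoot (s₁ * s₁) (s₂ * s₂) R S (S * c) N = combScale R S * (s₁ + s₂ * X) := by
    rw [combRoot, combScale, ← hX, hN]; ring
  simp [hroot, ← hX]

theorem exists_combPoly_eq_zero_iff {A₁ A₂ R S T : ℤ} (hS : S ≠ 0) :
    (∃ n : ℕ, combPoly A₁ A₂ R S T n = 0) ↔ IsSquare A₁ ∧ IsSquare A₂ ∧ S ∣ T ∧ 0 < R := by
  constructor
  · rintro ⟨n, hn⟩
    obtain ⟨⟨s₁, rfl⟩, ⟨s₂, rfl⟩⟩ := isSquare_of_combPoly_eq_zero hS hn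
    have of_root {e₁ e₂ : ℤ} (h₁ : |e₁| = |s₁|) (h₂ : |e₂| = |s₂|)
        (h : combRoot (s₁ * s₁) (s₂ * s₂) R S T n
          - combScale R S * (e₁ + e₂ * combWeight (s₁ * s₁) (s₂ * s₂)) = 0) :
        S ∣ T ∧ 0 < R :=
      dvd_and_pos_of_combRoot_eq hS n.cast_nonneg (combWeight_mul_self_sq_add_pos h₁ h₂)
        (sub_eq_zero.mp h)
    refine ⟨⟨s₁, rfl⟩, ⟨s₂, rfl⟩, ?_⟩
    rw [combPoly_mul_self] at hn
    simp only [mul_eq_zero] at hn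
    obtain ((h | h) | h) | h := hn
    · exact of_root rfl rfl h
    · exact of_root (abs_neg s₁) rfl h
    · exact of_root rfl (abs_neg s₂) h
    · exact of_root (abs_neg s₁) (abs_neg s₂) h
  · rintro ⟨⟨s₁, rfl⟩, ⟨s₂, rfl⟩, ⟨c, rfl⟩, hR⟩
    exact exists_combPoly_mul_self_eq_zero s₁ s₂ c hS hR

/-! ### Solutions of the Pell equation `X² - (a² - 1) Y² = 1` -/

section Pell

open Pell

/-- The solution `(a, 1)` of the Pell equation `X² - (a² - 1) Y² = 1`. -/
def pellOne (a : ℤ) : Solution₁ (a ^ 2 - 1) := .mk a 1 (by ring)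

/-- The first coordinate of the `n`-th solution of `X² - (a² - 1) Y² = 1`, for `n ∈ ℤ`. -/
def pellX (a n : ℤ) : ℤ := (pellOne a ^ n).x

/-- The second coordinate of the `n`-th solution of `X² - (a² - 1) Y² = 1`, for `n ∈ ℤ`; this is
the Lucas sequence usually written `ψ_n(2a)`. -/
def pellY (a n : ℤ) : ℤ := (pellOne a ^ n).y

variable (a m n : ℤ)

@[simp] lemma pellX_zero : pellX a 0 = 1 := by simp [pellX]

@[simp] lemma pellY_zero : pellY a 0 = 0 := by simp [pellY]

@[simp] lemma pellX_one : pellX a 1 = a := by simp [pellX, pellOne]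

@[simp] lemma pellY_one : pellY a 1 = 1 := by simp [pellY, pellOne]

lemma pellX_sq : pellX a n ^ 2 = (a ^ 2 - 1) * pellY a n ^ 2 + 1 := by
  rw [pellX, pellY]
  linear_combination (pellOne a ^ n).prop

lemma pellX_add :
    pellX a (m + n) = pellX a m * pellX a n + (a ^ 2 - 1) * (pellY a m * pellY a n) := by
  simp only [pellX, pellY, zpow_add, Solution₁.x_mul]

lemma pellY_add : pellY a (m + n) = pellX a m * pellY a n + pellY a m * pellX a n := by
  simp only [pellX, pellY, zpow_add, Solution₁.y_mul]

@[simp] lemma pellX_neg : pellX a (-n) = pellX a n := by simp [pellX, zpow_neg]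

@[simp] lemma pellY_neg : pellY a (-n) = -pellY a n := by simp [pellY, zpow_neg]

lemma pellX_add_one : pellX a (n + 1) = pellX a n * a + (a ^ 2 - 1) * pellY a n := by
  simp [pellX_add]

lemma pellY_add_one : pellY a (n + 1) = pellX a n + pellY a n * a := by
  simp [pellY_add]

lemma pellY_add_two : pellY a (n + 2) = 2 * a * pellY a (n + 1) - pellY a n := by
  rw [show n + 2 = (n + 1) + 1 by ring, pellY_add_one a (n + 1), pellX_add_one, pellY_add_one]
  ring

variable {a m n}

/-! #### Congruences in the parameter -/

lemma pell_modEq_pell {b : ℤ} (h : a ≡ b [ZMOD m]) (k : ℕ) :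
    pellX a k ≡ pellX b k [ZMOD m] ∧ pellY a k ≡ pellY b k [ZMOD m] := by
  induction k with
  | zero => simp [Int.ModEq.refl]
  | succ k ih =>
    push_cast
    simp only [pellX_add_one, pellY_add_one]
    exact ⟨(ih.1.mul h).add (((h.pow 2).sub_right 1).mul ih.2), ih.1.add (ih.2.mul h)⟩

lemma pellY_modEq_pellY {b : ℤ} (h : a ≡ b [ZMOD m]) (n : ℤ) :
    pellY a n ≡ pellY b n [ZMOD m] := by
  obtain ⟨k, rfl | rfl⟩ := n.eq_nat_or_neg
  · exact (pell_modEq_pell h k).2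
  · simpa using (pell_modEq_pell h k).2.neg

lemma pell_one_natCast (k : ℕ) : pellX 1 k = 1 ∧ pellY 1 k = k := by
  induction k with
  | zero => simp
  | succ k ih => simp [pellX_add_one, pellY_add_one, ih, add_comm]

lemma pellY_modEq_self (h : a ≡ 1 [ZMOD m]) (n : ℤ) : pellY a n ≡ n [ZMOD m] := by
  have pellY_one_left : pellY 1 n = n := by
    obtain ⟨k, rfl | rfl⟩ := n.eq_nat_or_neg <;> simp [pell_one_natCast]
  simpa [pellY_one_left] using pellY_modEq_pellY h n

-- Modulo `4a - 5` the roots of `X² - 2aX + 1` are `2` and `1/2`.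
lemma three_mul_two_pow_mul_pellY_modEq (a : ℤ) (k : ℕ) :
    3 * 2 ^ k * pellY a k ≡ 2 * (4 ^ k - 1) [ZMOD 4 * a - 5] := by
  suffices h : 3 * 2 ^ k * pellY a k ≡ 2 * (4 ^ k - 1) [ZMOD 4 * a - 5] ∧
      3 * 2 ^ (k + 1) * pellY a (k + 1) ≡ 2 * (4 ^ (k + 1) - 1) [ZMOD 4 * a - 5] from h.1
  induction k with
  | zero => simp [Int.ModEq.refl]
  | succ k ih =>
    refine ⟨mod_cast ih.2, ?_⟩
    push_cast
    rw [add_assoc (k : ℤ), one_add_one_eq_two, pellY_add_two]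
    have hroots : 4 * a ≡ 5 [ZMOD 4 * a - 5] := (Int.modEq_iff_dvd.mpr dvd_rfl).symm
    calc 3 * 2 ^ (k + 1 + 1) * (2 * a * pellY a (k + 1) - pellY a k)
        = 4 * a * (3 * 2 ^ (k + 1) * pellY a (k + 1)) - 4 * (3 * 2 ^ k * pellY a k) := by ring
      _ ≡ 5 * (2 * (4 ^ (k + 1) - 1)) - 4 * (2 * (4 ^ k - 1)) [ZMOD 4 * a - 5] :=
        (hroots.mul ih.2).sub (ih.1.mul_left 4)
      _ = 2 * (4 ^ (k + 1 + 1) - 1) := by ring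

/-! #### Monotonicity and growth -/

lemma isFundamental_pellOne (ha : 2 ≤ a) : IsFundamental (pellOne a) := by
  refine ⟨by simp only [pellOne, Solution₁.x_mk]; lia, by simp [pellOne], fun {b} hb ↦ ?_⟩
  have hy : 1 ≤ b.y ^ 2 := by
    have := Solution₁.y_ne_zero_of_one_lt_x hb
    exact (by positivity : 0 < b.y ^ 2)
  have hd : 0 ≤ a ^ 2 - 1 := by nlinarith
  have hsq : a ^ 2 ≤ b.x ^ 2 := by linarith [b.prop, mul_le_mul_of_nonneg_left hy hd]
  simpa only [pellOne, Solution₁.x_mk] using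
    (pow_le_pow_iff_left₀ (by lia) (by lia) two_ne_zero).mp hsq

lemma strictMono_pellY (ha : 2 ≤ a) : StrictMono (pellY a) :=
  (isFundamental_pellOne ha).y_strictMono

lemma pellX_pos (ha : 2 ≤ a) (n : ℤ) : 0 < pellX a n :=
  Solution₁.x_zpow_pos (by simp only [pellOne, Solution₁.x_mk]; lia) n

lemma pellY_pos (ha : 2 ≤ a) (hn : 0 < n) : 0 < pellY a n := by
  simpa using strictMono_pellY ha hn

lemma exists_eq_pellY_of_isSquare {C : ℤ} (ha : 2 ≤ a)
    (h : IsSquare ((a ^ 2 - 1) * C ^ 2 + 1)) : ∃ n : ℤ, C = pellY a n := by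
  obtain ⟨r, hr⟩ := h
  obtain ⟨n, hn | hn⟩ := (isFundamental_pellOne ha).eq_zpow_or_neg_zpow
    (Solution₁.mk r C (by linarith))
  · exact ⟨n, by rw [pellY, ← hn, Solution₁.y_mk]⟩
  · refine ⟨-n, ?_⟩
    simpa [pellY] using congrArg Solution₁.y hn

lemma le_pellY (ha : 2 ≤ a) (k : ℕ) : (k : ℤ) ≤ pellY a k := by
  induction k with
  | zero => simp
  | succ k ih =>
    have := strictMono_pellY ha (lt_add_one (k : ℤ))
    push_cast
    lia

lemma abs_le_abs_pellY (ha : 2 ≤ a) (n : ℤ) : |n| ≤ |pellY a n| := by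
  obtain ⟨k, rfl | rfl⟩ := n.eq_nat_or_neg <;>
    simpa using (le_pellY ha k).trans (le_abs_self _)

lemma abs_pellY_le_pellY (ha : 2 ≤ a) (h : |m| ≤ n) : |pellY a m| ≤ pellY a n := by
  rw [abs_le] at h ⊢
  rw [← pellY_neg]
  exact ⟨(strictMono_pellY ha).monotone h.1, (strictMono_pellY ha).monotone h.2⟩

lemma pow_le_pellY_add_one (ha : 2 ≤ a) (k : ℕ) : (2 * a - 1) ^ k ≤ pellY a (k + 1) := by
  induction k with
  | zero => simp
  | succ k ih =>
    have hlt := strictMono_pellY ha (lt_add_one (k : ℤ))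
    push_cast
    calc (2 * a - 1) ^ (k + 1) = (2 * a - 1) * (2 * a - 1) ^ k := pow_succ' _ _
      _ ≤ (2 * a - 1) * pellY a (k + 1) := mul_le_mul_of_nonneg_left ih (by lia)
      _ ≤ pellY a (k + 1 + 1) := by
        rw [add_assoc, one_add_one_eq_two, pellY_add_two]
        linarith

lemma pellY_add_one_le_pow (ha : 2 ≤ a) (k : ℕ) : pellY a (k + 1) ≤ (2 * a) ^ k := by
  induction k with
  | zero => simp
  | succ k ih =>
    push_cast
    calc pellY a (k + 1 + 1) ≤ 2 * a * pellY a (k + 1) := by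
          rw [add_assoc, one_add_one_eq_two, pellY_add_two]
          linarith [(Int.natCast_nonneg k).trans (le_pellY ha k)]
      _ ≤ 2 * a * (2 * a) ^ k := mul_le_mul_of_nonneg_left ih (by lia)
      _ = (2 * a) ^ (k + 1) := (pow_succ' _ _).symm

lemma two_mul_pellY_lt_pellX (ha : 3 ≤ a) (hn : 0 < n) : 2 * pellY a n < pellX a n := by
  have hY := pellY_pos (by lia : 2 ≤ a) hn
  have ha8 : 8 ≤ a ^ 2 - 1 := by nlinarith
  refine lt_of_pow_lt_pow_left₀ 2 (pellX_pos (by lia) n).le ?_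
  rw [pellX_sq]
  linarith [mul_le_mul_of_nonneg_right ha8 (sq_nonneg (pellY a n)), mul_pow 2 (pellY a n) 2,
    pow_pos hY 2]

/-! #### Divisibility in the index -/

lemma pellY_natCast_eq_yn {a : ℕ} (ha : 1 < a) (k : ℕ) : pellY a k = yn ha k := by
  suffices h : pellY a k = yn ha k ∧ pellY a (k + 1) = yn ha (k + 1) from h.1
  induction k with
  | zero => simp
  | succ k ih =>
    refine ⟨mod_cast ih.2, ?_⟩
    have hyn := yn_succ_succ ha k
    zify at hyn
    push_cast
    rw [add_assoc (k : ℤ), one_add_one_eq_two, pellY_add_two, ih.1, ih.2, add_assoc k]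
    linarith

lemma pellY_dvd_of_sq_dvd (ha : 2 ≤ a) (h : pellY a m ^ 2 ∣ pellY a n) : pellY a m ∣ n := by
  lift a to ℕ using by lia
  have ha' : 1 < a := by lia
  have of_nat (q s : ℕ) (h : pellY a q ^ 2 ∣ pellY a s) : pellY (a : ℤ) q ∣ (s : ℤ) := by
    rw [pellY_natCast_eq_yn ha', pellY_natCast_eq_yn ha', sq] at h
    rw [pellY_natCast_eq_yn ha']
    exact mod_cast dvd_of_ysq_dvd ha' (mod_cast h)
  obtain ⟨q, rfl | rfl⟩ := m.eq_nat_or_neg <;> obtain ⟨s, rfl | rfl⟩ := n.eq_nat_or_neg <;>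
    simpa using of_nat q s (by simpa using h)

lemma exists_isSquare_mul_mul_sq_add_one {d m : ℤ} (hd : 0 < d) (hsq : ¬IsSquare d) (hm : m ≠ 0) :
    ∃ x : ℤ, x ≠ 0 ∧ IsSquare (d * (m * x) ^ 2 + 1) := by
  have hsq' : ¬IsSquare (m ^ 2 * d) := fun ⟨r, hr⟩ ↦
    hsq (isSquare_of_sq_mul_eq_sq hm (hr.trans (sq r).symm))
  obtain ⟨x, y, hxy, hy⟩ := exists_of_not_isSquare (by positivity : 0 < m ^ 2 * d) hsq'
  exact ⟨y, hy, x, by linear_combination -hxy⟩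

lemma pellY_add_two_mul_modEq (a n s : ℤ) :
    pellY a (n + 2 * s) ≡ -pellY a n [ZMOD pellX a s] := by
  have hleft := pellY_add a (n + s) s
  have hright := pellY_add a (n + s) (-s)
  rw [pellX_neg, pellY_neg, add_neg_cancel_right] at hright
  rw [show n + 2 * s = n + s + s by ring]
  exact (Int.modEq_iff_dvd.mpr ⟨2 * pellY a (n + s), by linear_combination hleft + hright⟩).symm

lemma pellY_add_mul_two_mul_modEq (a n s k : ℤ) :
    pellY a (n + k * (2 * s)) ≡ pellY a n [ZMOD pellX a s] ∨
      pellY a (n + k * (2 * s)) ≡ -pellY a n [ZMOD pellX a s] := by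
  induction k using Int.induction_on with
  | zero => simp [Int.ModEq.refl]
  | succ i ih =>
    have h := pellY_add_two_mul_modEq a (n + i * (2 * s)) s
    rw [show n + i * (2 * s) + 2 * s = n + (i + 1) * (2 * s) by ring] at h
    exact ih.symm.imp (fun hi ↦ by simpa using h.trans hi.neg) (fun hi ↦ h.trans hi.neg)
  | pred i ih =>
    have h := pellY_add_two_mul_modEq a (n + (-i - 1) * (2 * s)) s
    rw [show n + (-i - 1) * (2 * s) + 2 * s = n + -i * (2 * s) by ring] at h
    have h' : pellY a (n + (-i - 1) * (2 * s)) ≡ -pellY a (n + -i * (2 * s)) [ZMOD pellX a s] := by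
      simpa using h.symm.neg
    exact ih.symm.imp (fun hi ↦ by simpa using h'.trans hi.neg) (fun hi ↦ h'.trans hi.neg)

lemma exists_abs_le_and_pellY_modEq (a n : ℤ) {s : ℤ} (hs : 0 < s) :
    ∃ n' : ℤ, |n'| ≤ s ∧ pellY a n' ≡ pellY a n [ZMOD pellX a s] ∧
      (n' ≡ n [ZMOD 2 * s] ∨ n' ≡ -n [ZMOD 2 * s]) := by
  obtain ⟨k, hk⟩ := exists_abs_two_mul_add_mul_le (by lia : 0 < 2 * s) n
  have habs : |n + k * (2 * s)| ≤ s := by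
    rw [abs_mul, abs_two] at hk
    lia
  have hmod : n + k * (2 * s) ≡ n [ZMOD 2 * s] := by simp [Int.ModEq]
  rcases pellY_add_mul_two_mul_modEq a n s k with h | h
  · exact ⟨_, habs, h, .inl hmod⟩
  · exact ⟨-(n + k * (2 * s)), by rwa [abs_neg],
      by simpa only [pellY_neg, neg_neg] using h.neg, .inr hmod.neg⟩

-- Since `2 * pellY a s < pellX a s`, the residues `pellY a n'` with `|n'| ≤ s` are distinct.
lemma modEq_or_modEq_neg_of_pellY_modEq (ha : 3 ≤ a) {s : ℤ} (hs : s ≠ 0)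
    (h : pellY a m ≡ pellY a n [ZMOD pellX a s]) :
    m ≡ n [ZMOD 2 * s] ∨ m ≡ -n [ZMOD 2 * s] := by
  wlog hs_pos : 0 < s generalizing s
  · simpa [mul_neg, Int.modEq_neg] using
      this (s := -s) (neg_ne_zero.mpr hs) (by rwa [pellX_neg]) (by lia)
  have ha2 : 2 ≤ a := by lia
  obtain ⟨m', hm', hmY, hmmod⟩ := exists_abs_le_and_pellY_modEq a m hs_pos
  obtain ⟨n', hn', hnY, hnmod⟩ := exists_abs_le_and_pellY_modEq a n hs_pos
  obtain rfl : m' = n' := by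
    have hdvd := ((hmY.trans h).trans hnY.symm).symm.dvd
    refine (strictMono_pellY ha2).injective (sub_eq_zero.mp (Int.eq_zero_of_abs_lt_dvd hdvd ?_))
    calc |pellY a m' - pellY a n'| ≤ |pellY a m'| + |pellY a n'| := abs_sub _ _
      _ ≤ 2 * pellY a s := by
        linarith [abs_pellY_le_pellY ha2 hm', abs_pellY_le_pellY ha2 hn']
      _ < pellX a s := two_mul_pellY_lt_pellX ha hs_pos
  rcases hmmod with hm | hm <;> rcases hnmod with hn | hn
  · exact .inl (hm.symm.trans hn)
  · exact .inr (hm.symm.trans hn)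
  · exact .inr (by simpa using (hm.symm.trans hn).neg)
  · exact .inl (by simpa using (hm.symm.trans hn).neg)

end Pell

/-! ### A Diophantine description of the Pell sequence by a single square -/

section PellRelation

/-- If `dfiD a C` is a square, then `C` is a term of the sequence `pellY a`. The names `D`, …, `I`
follow the classical definition of exponentiation by Matiyasevich and Robinson. -/
def dfiD (a C : ℤ) : ℤ := (a ^ 2 - 1) * C ^ 2 + 1

/-- The multiple of `C²` which has to be a term of the sequence `pellY a`. -/
def dfiE (a C x : ℤ) : ℤ := 2 * C ^ 2 * dfiD a C * x

/-- If `dfiF a C x` is a square, then `dfiE a C x` is a term of the sequence `pellY a`. -/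
def dfiF (a C x : ℤ) : ℤ := (a ^ 2 - 1) * dfiE a C x ^ 2 + 1

/-- The base of an auxiliary Pell equation, congruent to `a` modulo `dfiF a C x` and to `1`
modulo `2C`. -/
def dfiG (a C x : ℤ) : ℤ := a + dfiF a C x * (1 - a + 2 * C ^ 2 * dfiD a C)

/-- A number congruent to `C` modulo `dfiF a C x` and to `b` modulo `2C`. -/
def dfiH (a b C x y : ℤ) : ℤ := C + dfiF a C x * (b - C + 2 * C * y)

/-- If `dfiI a b C x y` is a square, then `dfiH a b C x y` is a term of the sequence
`pellY (dfiG a C x)`. -/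
def dfiI (a b C x y : ℤ) : ℤ := (dfiG a C x ^ 2 - 1) * dfiH a b C x y ^ 2 + 1

/-- A product of three pairwise coprime factors. For suitable `b` and `C`, it is a square for some
`x ≠ 0` and `y` if and only if `C = pellY a b`. -/
def dfi (a b C x y : ℤ) : ℤ := dfiD a C * dfiF a C x * dfiI a b C x y

lemma isSquare_and_isSquare_of_isCoprime_mul {u v : ℤ} (hu : 0 < u) (hv : 0 < v)
    (hc : IsCoprime u v) (h : IsSquare (u * v)) : IsSquare u ∧ IsSquare v := by
  have isSquare_left {u v : ℤ} (hu : 0 < u) (hc : IsCoprime u v) (h : IsSquare (u * v)) :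
      IsSquare u := by
    obtain ⟨r, hr⟩ := h
    obtain ⟨t, ht | ht⟩ := Int.sq_of_isCoprime hc (by rw [hr, sq])
    · exact ⟨t, by rw [ht, sq]⟩
    · nlinarith [hu, sq_nonneg t]
  exact ⟨isSquare_left hu hc h, isSquare_left hv hc.symm (by rwa [mul_comm])⟩

lemma isCoprime_of_modEq {m u v : ℤ} (h : u ≡ v [ZMOD m]) (hc : IsCoprime m v) :
    IsCoprime m u := by
  obtain ⟨k, hk⟩ := h.symm.dvd
  rw [sub_eq_iff_eq_add'.mp hk]
  exact hc.add_mul_left_right k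

variable {a b C m x y : ℤ}

/-! #### Congruences -/

lemma dfiF_modEq_one (h : m ∣ dfiE a C x) : dfiF a C x ≡ 1 [ZMOD m] := by
  simpa [dfiF] using ((((Int.modEq_zero_iff_dvd.mpr h).pow 2).mul_left (a ^ 2 - 1)).add_right 1)

lemma two_mul_dvd_dfiE : 2 * C ∣ dfiE a C x := ⟨C * dfiD a C * x, by rw [dfiE]; ring⟩

lemma dfiG_modEq_one (h : m ∣ 2 * C ^ 2 * dfiD a C) : dfiG a C x ≡ 1 [ZMOD m] := by
  have hF : dfiF a C x ≡ 1 [ZMOD m] := dfiF_modEq_one (h.mul_right x)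
  simpa [dfiG] using
    (hF.mul ((Int.modEq_zero_iff_dvd.mpr h).add_left (1 - a))).add_left a

lemma dfiG_modEq_one_two_mul : dfiG a C x ≡ 1 [ZMOD 2 * C] :=
  dfiG_modEq_one ⟨C * dfiD a C, by ring⟩

lemma dfiG_modEq : dfiG a C x ≡ a [ZMOD dfiF a C x] := by simp [dfiG, Int.ModEq]

lemma dfiH_modEq : dfiH a b C x y ≡ C [ZMOD dfiF a C x] := by simp [dfiH, Int.ModEq]

lemma dfiH_modEq_two_mul : dfiH a b C x y ≡ b [ZMOD 2 * C] := by
  calc dfiH a b C x y ≡ C + 1 * (b - C + 2 * C * y) [ZMOD 2 * C] :=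
        ((dfiF_modEq_one two_mul_dvd_dfiE).mul_right _).add_left C
    _ ≡ b [ZMOD 2 * C] := Int.modEq_iff_dvd.mpr ⟨-y, by ring⟩

lemma dfiI_modEq : dfiI a b C x y ≡ dfiD a C [ZMOD dfiF a C x] :=
  (((dfiG_modEq.pow 2).sub_right 1).mul (dfiH_modEq.pow 2)).add_right 1

lemma dfiI_modEq_one : dfiI a b C x y ≡ 1 [ZMOD dfiD a C] := by
  have hG : dfiG a C x ≡ 1 [ZMOD dfiD a C] := dfiG_modEq_one (Dvd.intro_left _ rfl)
  simpa [dfiI] using (((hG.pow 2).sub_right 1).mul_right (dfiH a b C x y ^ 2)).add_right 1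

/-! #### Signs and factorization -/

lemma sq_sub_one_pos (ha : 2 ≤ a) : 0 < a ^ 2 - 1 := by nlinarith

lemma dfiD_pos (ha : 2 ≤ a) : 0 < dfiD a C := by
  have := sq_sub_one_pos ha
  rw [dfiD]
  positivity

lemma dfiF_pos (ha : 2 ≤ a) : 0 < dfiF a C x := by
  have := sq_sub_one_pos ha
  rw [dfiF]
  positivity

lemma two_le_dfiG (ha : 2 ≤ a) (hC : C ≠ 0) : 2 ≤ dfiG a C x := by
  have hF := dfiF_pos (C := C) (x := x) ha
  have hCsq : 1 ≤ C ^ 2 := pow_pos (abs_pos.mpr hC) 2 |>.trans_eq (sq_abs C)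
  have haD : a ≤ dfiD a C := by
    rw [dfiD]
    nlinarith [mul_le_mul_of_nonneg_left hCsq (sq_sub_one_pos ha).le]
  have hcof : 0 ≤ 1 - a + 2 * C ^ 2 * dfiD a C := by nlinarith
  rw [dfiG]
  linarith [mul_nonneg hF.le hcof]

lemma dfiI_pos (ha : 2 ≤ a) (hC : C ≠ 0) : 0 < dfiI a b C x y := by
  have := sq_sub_one_pos (two_le_dfiG (x := x) ha hC)
  rw [dfiI]
  positivity

lemma isSquare_factors_of_isSquare_dfi (ha : 2 ≤ a) (hC : C ≠ 0) (h : IsSquare (dfi a b C x y)) :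
    IsSquare (dfiD a C) ∧ IsSquare (dfiF a C x) ∧ IsSquare (dfiI a b C x y) := by
  have hDF : IsCoprime (dfiD a C) (dfiF a C x) :=
    isCoprime_of_modEq (dfiF_modEq_one ⟨2 * C ^ 2 * x, by rw [dfiE]; ring⟩) isCoprime_one_right
  have hDI : IsCoprime (dfiD a C) (dfiI a b C x y) :=
    isCoprime_of_modEq dfiI_modEq_one isCoprime_one_right
  have hFI : IsCoprime (dfiF a C x) (dfiI a b C x y) := isCoprime_of_modEq dfiI_modEq hDF.symm
  have hD : 0 < dfiD a C := dfiD_pos ha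
  have hF : 0 < dfiF a C x := dfiF_pos ha
  obtain ⟨hsqDF, hsqI⟩ := isSquare_and_isSquare_of_isCoprime_mul (mul_pos hD hF) (dfiI_pos ha hC)
    (hDI.mul_left hFI) h
  obtain ⟨hsqD, hsqF⟩ := isSquare_and_isSquare_of_isCoprime_mul hD hF hDF hsqDF
  exact ⟨hsqD, hsqF, hsqI⟩

/-! #### The two directions -/

lemma eq_or_eq_neg_of_modEq {q : ℤ} (hb : |b| ≤ |C|) (hq : |q| ≤ |C|)
    (h : q ≡ b [ZMOD 2 * C]) : q = b ∨ q = -b := by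
  rcases lt_or_ge |b - q| |2 * C| with hlt | hge
  · exact .inl (sub_eq_zero.mp
      (Int.eq_zero_of_abs_lt_dvd ((abs_dvd _ _).mpr h.dvd) hlt)).symm
  · rw [abs_mul, abs_two] at hge
    rw [abs_le] at hb hq
    rcases le_abs.mp hge with hge | hge <;> lia

-- From `C = pellY a q`, `dfiE a C x = pellY a s` and `dfiH a b C x y = pellY (dfiG a C x) r` one
-- gets `r ≡ b` modulo `2C` and `pellY a r ≡ pellY a q` modulo `(pellX a s)²`, hence `r ≡ ±q`
-- modulo `2s`; here `C ∣ s` because `C² ∣ pellY a s`.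
lemma exists_eq_pellY_and_modEq_of_isSquare_dfi (ha : 3 ≤ a) (hC : C ≠ 0) (hx : x ≠ 0)
    (h : IsSquare (dfi a b C x y)) :
    ∃ q : ℤ, C = pellY a q ∧ (q ≡ b [ZMOD 2 * C] ∨ q ≡ -b [ZMOD 2 * C]) := by
  have ha2 : 2 ≤ a := by lia
  obtain ⟨hD, hF, hI⟩ := isSquare_factors_of_isSquare_dfi ha2 hC h
  obtain ⟨q, hq⟩ := exists_eq_pellY_of_isSquare ha2 hD
  obtain ⟨s, hs⟩ := exists_eq_pellY_of_isSquare ha2 hF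
  obtain ⟨r, hr⟩ := exists_eq_pellY_of_isSquare (two_le_dfiG ha2 hC) hI
  have hs_ne : s ≠ 0 := by
    rintro rfl
    rw [pellY_zero] at hs
    exact mul_ne_zero (mul_ne_zero (by positivity) (dfiD_pos ha2).ne') hx hs
  have hCs : 2 * C ∣ 2 * s := by
    refine mul_dvd_mul_left 2 (hq ▸ pellY_dvd_of_sq_dvd ha2 ?_)
    rw [← hq, ← hs]
    exact ⟨2 * dfiD a C * x, by rw [dfiE]; ring⟩
  have hX : pellX a s ∣ dfiF a C x := ⟨pellX a s, by rw [dfiF, hs, ← pellX_sq, sq]⟩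
  have hrb : r ≡ b [ZMOD 2 * C] :=
    calc r ≡ dfiH a b C x y [ZMOD 2 * C] := hr ▸ (pellY_modEq_self dfiG_modEq_one_two_mul r).symm
      _ ≡ b [ZMOD 2 * C] := dfiH_modEq_two_mul
  have hYrq : pellY a r ≡ pellY a q [ZMOD pellX a s] :=
    calc pellY a r ≡ dfiH a b C x y [ZMOD pellX a s] :=
          hr ▸ (pellY_modEq_pellY (dfiG_modEq.of_dvd hX) r).symm
      _ ≡ pellY a q [ZMOD pellX a s] := hq ▸ dfiH_modEq.of_dvd hX
  refine ⟨q, hq, (modEq_or_modEq_neg_of_pellY_modEq ha hs_ne hYrq).imp (fun hrq ↦ ?_)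
    (fun hrq ↦ ?_)⟩
  · exact (hrq.of_dvd hCs).symm.trans hrb
  · simpa using ((hrq.of_dvd hCs).symm.trans hrb).neg

theorem eq_pellY_of_isSquare_dfi {h : ℤ} (ha : 3 ≤ a) (hb : 0 < b) (hba : 2 * b < a - 1)
    (hx : x ≠ 0) (hC : C = b + (a - 1) * h) (hsq : IsSquare (dfi a b C x y)) :
    C = pellY a b := by
  have hbC : |b| ≤ |C| := by
    rw [abs_of_pos hb, le_abs, hC]
    rcases le_or_gt 0 h with h0 | h0
    · exact .inl (by nlinarith)
    · exact .inr (by nlinarith)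
  have hC_ne : C ≠ 0 := abs_pos.mp ((abs_pos.mpr hb.ne').trans_le hbC)
  obtain ⟨q, hq, hqb⟩ := exists_eq_pellY_and_modEq_of_isSquare_dfi ha hC_ne hx hsq
  have hqC : |q| ≤ |C| := hq ▸ abs_le_abs_pellY (by lia) q
  have hq_eq : q = b ∨ q = -b := by
    rcases hqb with hqb | hqb
    · exact eq_or_eq_neg_of_modEq hbC hqC hqb
    · simpa [or_comm] using eq_or_eq_neg_of_modEq ((abs_neg b).trans_le hbC) hqC hqb
  rcases hq_eq with rfl | rfl
  · exact hq
  · have hCb : C ≡ b [ZMOD a - 1] := by simp [hC, Int.ModEq]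
    have hCnegb : C ≡ -b [ZMOD a - 1] :=
      hq ▸ pellY_modEq_self (Int.modEq_iff_dvd.mpr ⟨-1, by ring⟩) (-b)
    have hdvd : a - 1 ∣ 2 * b := by simpa [two_mul] using (hCnegb.symm.trans hCb).dvd
    linarith [Int.le_of_dvd (by lia) hdvd]

theorem exists_isSquare_dfi (ha : 2 ≤ a) (hb : 0 < b) :
    ∃ x y : ℤ, x ≠ 0 ∧ IsSquare (dfi a b (pellY a b) x y) := by
  set C := pellY a b with hC
  have hC_pos : 0 < C := pellY_pos ha hb
  have hnsq : ¬IsSquare (a ^ 2 - 1) := by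
    rintro ⟨r, hr⟩
    have hra : |r| < |a| := sq_lt_sq.mp (by lia)
    rw [abs_of_nonneg (by lia : 0 ≤ a)] at hra
    nlinarith [abs_mul_abs_self r, abs_nonneg r]
  have hmul : 2 * C ^ 2 * dfiD a C ≠ 0 := mul_ne_zero (by positivity) (dfiD_pos ha).ne'
  obtain ⟨x, hx, hF⟩ := exists_isSquare_mul_mul_sq_add_one (sq_sub_one_pos ha) hnsq hmul
  obtain ⟨t, ht⟩ : dfiF a C x ∣ pellY (dfiG a C x) b - C :=
    (pellY_modEq_pellY dfiG_modEq b).symm.dvd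
  have ht_mod : t ≡ b - C [ZMOD 2 * C] :=
    calc t = 1 * t := (one_mul t).symm
      _ ≡ dfiF a C x * t [ZMOD 2 * C] := (dfiF_modEq_one two_mul_dvd_dfiE).symm.mul_right t
      _ = pellY (dfiG a C x) b - C := ht.symm
      _ ≡ b - C [ZMOD 2 * C] := (pellY_modEq_self dfiG_modEq_one_two_mul b).sub_right C
  obtain ⟨y, hy⟩ := ht_mod.symm.dvd
  have hH : dfiH a b C x y = pellY (dfiG a C x) b := by
    rw [dfiH]
    linear_combination -ht - dfiF a C x * hy
  have hD : IsSquare (dfiD a C) := ⟨pellX a b, by rw [dfiD, hC, ← pellX_sq, sq]⟩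
  have hI : IsSquare (dfiI a b C x y) :=
    ⟨pellX (dfiG a C x) b, by rw [dfiI, hH, ← pellX_sq, sq]⟩
  exact ⟨x, y, hx, (hD.mul hF).mul hI⟩

end PellRelation

/-! ### Binomial coefficients as quotients of terms of Pell sequences -/

section BinomialQuotient

open Finset

/-- The quotient of `(V + 1) ^ (2 * n)` by `V ^ n`, for large `V`. For `Y ∣ V` it is congruent to
the central binomial coefficient modulo `Y`. -/
def upperBinomSum (n : ℕ) (V : ℤ) : ℤ := ∑ i ∈ range (n + 1), ((2 * n).choose (n + i) : ℤ) * V ^ i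

lemma add_one_pow_two_mul_eq (n : ℕ) (V : ℤ) :
    (V + 1) ^ (2 * n) =
      V ^ n * upperBinomSum n V + ∑ j ∈ range n, ((2 * n).choose j : ℤ) * V ^ j := by
  rw [add_pow, show 2 * n + 1 = n + (n + 1) by ring, sum_range_add, add_comm, upperBinomSum,
    mul_sum]
  congr 1 <;> exact sum_congr rfl fun _ _ ↦ by ring

lemma pow_mul_upperBinomSum_le (n : ℕ) {V : ℤ} (hV : 0 ≤ V) :
    V ^ n * upperBinomSum n V ≤ (V + 1) ^ (2 * n) := by
  rw [add_one_pow_two_mul_eq]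
  exact le_add_of_nonneg_right (by positivity)

lemma upperBinomSum_pos (n : ℕ) {V : ℤ} (hV : 0 < V) : 0 < upperBinomSum n V := by
  refine sum_pos (fun i hi ↦ ?_) (by simp)
  have : 0 < (2 * n).choose (n + i) := Nat.choose_pos (by rw [mem_range] at hi; lia)
  positivity

lemma dvd_upperBinomSum_iff {n : ℕ} {V Y : ℤ} (h : Y ∣ V) :
    Y ∣ upperBinomSum n V ↔ Y ∣ ((2 * n).choose n : ℤ) := by
  simp only [upperBinomSum, sum_range_succ', pow_zero, mul_one, add_zero]
  exact dvd_add_right (dvd_sum fun i _ ↦ (h.trans (dvd_pow_self V i.succ_ne_zero)).mul_left _)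

lemma mul_sum_choose_mul_pow_le (n : ℕ) {V : ℤ} (hV : 1 ≤ V) :
    V * ∑ j ∈ range n, ((2 * n).choose j : ℤ) * V ^ j ≤ 4 ^ n * V ^ n := by
  calc V * ∑ j ∈ range n, ((2 * n).choose j : ℤ) * V ^ j
      = ∑ j ∈ range n, ((2 * n).choose j : ℤ) * V ^ (j + 1) := by
        rw [mul_sum]
        exact sum_congr rfl fun _ _ ↦ by ring
    _ ≤ ∑ j ∈ range n, ((2 * n).choose j : ℤ) * V ^ n := by
        gcongr with j hj
        exact Nat.succ_le_of_lt (mem_range.mp hj)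
    _ ≤ ∑ j ∈ range (2 * n + 1), ((2 * n).choose j : ℤ) * V ^ n :=
        sum_le_sum_of_subset_of_nonneg (range_subset_range.mpr (by lia)) fun _ _ _ ↦ by positivity
    _ = 4 ^ n * V ^ n := by
        rw [← sum_mul, ← Nat.cast_sum, Nat.sum_range_choose, pow_mul]
        norm_num

lemma eight_mul_mul_add_one_pow_le {n : ℕ} {V Y : ℤ} (hY : 1 ≤ Y) (hV : V = 8 * 4 ^ n * Y) :
    8 * Y * (V + 1) ^ (2 * n) ≤ (8 * Y * upperBinomSum n V + 1) * V ^ n := by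
  have hV_pos : 0 < V := hV ▸ mul_pos (by positivity) (by lia)
  have hrem : 8 * Y * ∑ j ∈ range n, ((2 * n).choose j : ℤ) * V ^ j ≤ V ^ n := by
    refine le_of_mul_le_mul_left ?_ (by positivity : (0 : ℤ) < 4 ^ n)
    calc 4 ^ n * (8 * Y * ∑ j ∈ range n, ((2 * n).choose j : ℤ) * V ^ j)
        = V * ∑ j ∈ range n, ((2 * n).choose j : ℤ) * V ^ j := by
          nth_rw 2 [hV]
          ring
      _ ≤ 4 ^ n * V ^ n := mul_sum_choose_mul_pow_le n hV_pos
  rw [add_one_pow_two_mul_eq]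
  linarith

lemma sub_mul_pow_le_mul_sub_one_pow {A : ℤ} (hA : 1 ≤ A) (n : ℕ) :
    (A - n) * A ^ n ≤ A * (A - 1) ^ n := by
  induction n with
  | zero => simp
  | succ k ih =>
    have hstep := mul_le_mul_of_nonneg_left ih (by lia : 0 ≤ A - 1)
    have hnonneg : 0 ≤ k * A ^ k := by positivity
    push_cast
    linear_combination hstep + hnonneg

lemma sub_mul_pow_le_mul_pellY {a : ℤ} (ha : 2 ≤ a) (k : ℕ) :
    (2 * a - k) * (2 * a) ^ k ≤ 2 * a * pellY a (k + 1) :=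
  (sub_mul_pow_le_mul_sub_one_pow (by lia) k).trans
    (mul_le_mul_of_nonneg_left (pow_le_pellY_add_one ha k) (by lia))

variable {n : ℕ} {Y u V m : ℤ}

lemma two_mul_mul_add_one_pow (n : ℕ) (u V : ℤ) :
    (2 * (u * (V + 1))) ^ (2 * n) = (2 * u) ^ (2 * n) * (V + 1) ^ (2 * n) := by
  rw [← mul_assoc, mul_pow]

lemma two_mul_two_mul_sq_mul_pow (n : ℕ) (u V : ℤ) :
    (2 * (2 * u ^ 2 * V)) ^ n = (2 * u) ^ (2 * n) * V ^ n := by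
  rw [pow_mul, ← mul_pow]
  ring

lemma eight_mul_pellY_le (hY : 1 ≤ Y) (hu : 1 ≤ u) (hV : V = 8 * 4 ^ n * Y)
    (hn : n * (8 * Y * upperBinomSum n V + 2) ≤ 2 * (2 * u ^ 2 * V)) :
    8 * Y * pellY (u * (V + 1)) (2 * n + 1) ≤
      (8 * Y * upperBinomSum n V + 2) * pellY (2 * u ^ 2 * V) (n + 1) := by
  have hV_pos : 0 < V := hV ▸ mul_pos (by positivity) (by lia)
  have ha : 2 ≤ u * (V + 1) := by nlinarith
  have hb : 2 ≤ 2 * u ^ 2 * V := by nlinarith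
  have hZ := upperBinomSum_pos n hV_pos
  have hC := pellY_add_one_le_pow ha (2 * n)
  have hJ := sub_mul_pow_le_mul_pellY hb n
  have hJ_pos : 0 < pellY (2 * u ^ 2 * V) (n + 1) := pellY_pos hb (by lia)
  have hpow := eight_mul_mul_add_one_pow_le hY hV
  push_cast at hC
  set Z := upperBinomSum n V
  set b := 2 * u ^ 2 * V with hb_def
  have hbn : 0 < 2 * b - n := by nlinarith [mul_pos (by lia : 0 < Y) hZ]
  refine le_of_mul_le_mul_left ?_ hbn
  calc (2 * b - n) * (8 * Y * pellY (u * (V + 1)) (2 * n + 1))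
      ≤ (2 * b - n) * (8 * Y * (2 * (u * (V + 1))) ^ (2 * n)) := by gcongr
    _ = (2 * b - n) * ((2 * u) ^ (2 * n) * (8 * Y * (V + 1) ^ (2 * n))) := by
        rw [two_mul_mul_add_one_pow]
        ring
    _ ≤ (2 * b - n) * ((2 * u) ^ (2 * n) * ((8 * Y * Z + 1) * V ^ n)) := by gcongr
    _ = (8 * Y * Z + 1) * ((2 * b - n) * (2 * b) ^ n) := by
        rw [hb_def, two_mul_two_mul_sq_mul_pow]
        ring
    _ ≤ (8 * Y * Z + 1) * (2 * b * pellY b (n + 1)) := by gcongr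
    _ ≤ (2 * b - n) * ((8 * Y * Z + 2) * pellY b (n + 1)) := by
        linarith [mul_le_mul_of_nonneg_right hn hJ_pos.le]

lemma four_mul_sub_pellY_le (hY : 0 ≤ Y) (hu : 1 ≤ u) (hV : 1 ≤ V) (hnu : n ≤ u)
    (hn : 8 * n * Y * upperBinomSum n V ≤ 2 * (u * (V + 1))) :
    4 * Y * (upperBinomSum n V * pellY (2 * u ^ 2 * V) (n + 1) -
      pellY (u * (V + 1)) (2 * n + 1)) ≤ pellY (2 * u ^ 2 * V) (n + 1) := by
  have ha : 2 ≤ u * (V + 1) := by nlinarith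
  have hb : 2 ≤ 2 * u ^ 2 * V := by nlinarith
  have hZ := upperBinomSum_pos n hV
  have hC := sub_mul_pow_le_mul_pellY ha (2 * n)
  have hJ := pellY_add_one_le_pow hb n
  have hJ_pos : 0 < pellY (2 * u ^ 2 * V) (n + 1) := pellY_pos hb (by lia)
  have hpow := pow_mul_upperBinomSum_le n (by lia : 0 ≤ V)
  push_cast at hC
  set Z := upperBinomSum n V
  set J := pellY (2 * u ^ 2 * V) (n + 1)
  have hna : 0 ≤ 2 * (u * (V + 1)) - 2 * n := by nlinarith
  have hZJ : (2 * (u * (V + 1)) - 2 * n) * (Z * J) ≤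
      2 * (u * (V + 1)) * pellY (u * (V + 1)) (2 * n + 1) :=
    calc (2 * (u * (V + 1)) - 2 * n) * (Z * J)
        ≤ (2 * (u * (V + 1)) - 2 * n) * (Z * (2 * (2 * u ^ 2 * V)) ^ n) := by gcongr
      _ = (2 * (u * (V + 1)) - 2 * n) * ((2 * u) ^ (2 * n) * (V ^ n * Z)) := by
          rw [two_mul_two_mul_sq_mul_pow]
          ring
      _ ≤ (2 * (u * (V + 1)) - 2 * n) * ((2 * u) ^ (2 * n) * (V + 1) ^ (2 * n)) := by gcongr
      _ ≤ 2 * (u * (V + 1)) * pellY (u * (V + 1)) (2 * n + 1) := by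
          rwa [← two_mul_mul_add_one_pow]
  refine le_of_mul_le_mul_left ?_ (by lia : 0 < 2 * (u * (V + 1)))
  linarith [mul_le_mul_of_nonneg_right hn hJ_pos.le,
    mul_le_mul_of_nonneg_left hZJ (by lia : 0 ≤ 4 * Y)]

-- The quotient `C / J` is close to `(V + 1) ^ (2 * n) / V ^ n`, whose integral part is `Z`.
lemma four_mul_abs_pellY_sub_le (hn : 1 ≤ n) (hY : 1 ≤ Y) (hm : 1 ≤ m) (hu : 2 * (n * m) ≤ u)
    (hV : V = 8 * 4 ^ n * Y) (hZ : upperBinomSum n V ≤ 3 * m) :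
    4 * Y * |pellY (u * (V + 1)) (2 * n + 1) -
      upperBinomSum n V * pellY (2 * u ^ 2 * V) (n + 1)| ≤ pellY (2 * u ^ 2 * V) (n + 1) := by
  have : (1 : ℤ) ≤ n := by exact_mod_cast hn
  have hV32 : 32 * Y ≤ V := by
    have h4 : (4 : ℤ) ≤ 4 ^ n := le_self_pow₀ (by norm_num) (by lia)
    rw [hV]
    nlinarith
  have hnm : n ≤ n * m := le_mul_of_one_le_right (by lia) hm
  have huV : 64 * (n * m * Y) ≤ u * V :=
    calc 64 * (n * m * Y) = 2 * (n * m) * (32 * Y) := by ring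
      _ ≤ u * V := mul_le_mul hu hV32 (by lia) (by lia)
  have hYZ : n * (8 * Y * upperBinomSum n V) ≤ 24 * (n * m * Y) :=
    calc n * (8 * Y * upperBinomSum n V) ≤ n * (8 * Y * (3 * m)) := by gcongr
      _ = 24 * (n * m * Y) := by ring
  have hu2V : u * V ≤ u ^ 2 * V := by
    rw [sq, mul_assoc]
    exact le_mul_of_one_le_left (mul_nonneg (by lia) (by lia)) (by lia)
  have hnmY : n * m ≤ n * m * Y := le_mul_of_one_le_right (by lia) hY
  have hle := eight_mul_pellY_le hY (by lia : 1 ≤ u) hV (by linarith)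
  have hge := four_mul_sub_pellY_le (Y := Y) (n := n) (by lia) (by lia : 1 ≤ u) (by lia : 1 ≤ V)
    (by lia) (by linarith)
  rw [← abs_of_nonneg (by lia : 0 ≤ 4 * Y), ← abs_mul, abs_le]
  constructor <;> linarith

end BinomialQuotient

/-! ### Powers of two and central binomial coefficients from Pell equations -/

section PellSystem

variable {a b m u V W Y J : ℤ} {n : ℕ}

lemma eq_two_pow_of_dvd {k : ℕ} (hW : 1 ≤ W) (hlt : 2 * (W * 2 ^ k) ^ 2 ≤ 4 * a - 5)
    (h : 4 * a - 5 ∣ 3 * W * pellY a k - 2 * (W ^ 2 - 1)) : W = 2 ^ k := by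
  have ht : (1 : ℤ) ≤ 2 ^ k := one_le_pow₀ (by norm_num)
  have hpow := (three_mul_two_pow_mul_pellY_modEq a k).symm.dvd
  rw [show (4 : ℤ) ^ k = (2 ^ k) ^ 2 by rw [← pow_mul, mul_comm, pow_mul]; norm_num] at hpow
  set t : ℤ := 2 ^ k
  have hdvd : 4 * a - 5 ∣ 2 * ((W - t) * (t * W + 1)) := by
    rw [show 2 * ((W - t) * (t * W + 1)) = W * (3 * t * pellY a k - 2 * (t ^ 2 - 1)) -
      t * (3 * W * pellY a k - 2 * (W ^ 2 - 1)) by ring]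
    exact dvd_sub (hpow.mul_left W) (h.mul_left t)
  have hle : |W - t| ≤ W * t - 1 := by rw [abs_le]; constructor <;> nlinarith
  have hWt : 1 ≤ W * t := one_le_mul_of_one_le_of_one_le hW ht
  have hsmall : |2 * ((W - t) * (t * W + 1))| < 4 * a - 5 := by
    rw [abs_mul, abs_mul, abs_two, abs_of_pos (by linarith : 0 < t * W + 1)]
    nlinarith
  rcases mul_eq_zero.mp (Int.eq_zero_of_abs_lt_dvd hdvd hsmall) with h | h
  · norm_num at h
  · rcases mul_eq_zero.mp h with h | h <;> linarith

-- An index `r ≡ n + 1` modulo `b - 1` other than `n + 1` has `2 * n + 2 ≤ |r|`, so that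
-- `|pellY b r|` would be much larger than `pellY a (2 * n + 1)`.
lemma eq_pellY_of_modEq (ha : 2 ≤ a) (hab : a < b) (hn : 3 * n + 4 ≤ b) (hm : 2 ≤ |m|)
    (hJ : J ≡ n + 1 [ZMOD b - 1]) (hsq : IsSquare ((b ^ 2 - 1) * J ^ 2 + 1))
    (hlt : 2 * |pellY a (2 * n + 1) - m * J| < |J|) : J = pellY b (n + 1) := by
  have hb : 2 ≤ b := by lia
  obtain ⟨r, rfl⟩ := exists_eq_pellY_of_isSquare hb hsq
  by_contra hne
  have hr : r ≡ n + 1 [ZMOD b - 1] :=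
    (pellY_modEq_self (Int.modEq_sub b 1) r).symm.trans hJ
  have hr_ne : r - (n + 1) ≠ 0 := fun h ↦ hne (by rw [sub_eq_zero.mp h])
  have hdist := Int.le_of_dvd (abs_pos.mpr hr_ne) ((dvd_abs _ _).mpr hr.symm.dvd)
  have hr_abs : (2 * n + 1 : ℕ) + 1 ≤ |r| := by
    push_cast
    rw [le_abs] at hdist ⊢
    lia
  have habs : pellY b |r| ≤ |pellY b r| := by
    rcases abs_choice r with h | h
    · exact h.symm ▸ le_abs_self _
    · rw [h, pellY_neg]
      exact neg_le_abs _
  have hJ_ge : (2 * b - 1) ^ (2 * n + 1) ≤ |pellY b r| :=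
    calc (2 * b - 1) ^ (2 * n + 1) ≤ pellY b ((2 * n + 1 : ℕ) + 1) := pow_le_pellY_add_one hb _
      _ ≤ pellY b |r| := (strictMono_pellY hb).monotone hr_abs
      _ ≤ |pellY b r| := habs
  have hC_pos : 0 < pellY a (2 * n + 1) := pellY_pos ha (by lia)
  have hC_le : 4 * pellY a (2 * n + 1) ≤ |pellY b r| :=
    calc 4 * pellY a (2 * n + 1) ≤ (2 * b - 1) * (2 * a) ^ (2 * n) :=
          mul_le_mul (by lia) (mod_cast pellY_add_one_le_pow ha (2 * n)) hC_pos.le (by lia)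
      _ ≤ (2 * b - 1) * (2 * b - 1) ^ (2 * n) := by gcongr <;> lia
      _ = (2 * b - 1) ^ (2 * n + 1) := (pow_succ' _ _).symm
      _ ≤ |pellY b r| := hJ_ge
  have hmJ : 2 * |pellY b r| ≤ |m * pellY b r| := by
    rw [abs_mul]
    gcongr
  have htri := abs_sub_abs_le_abs_sub (m * pellY b r) (pellY a (2 * n + 1))
  rw [abs_sub_comm, abs_of_pos hC_pos] at htri
  lia

lemma pow_le_two_mul_pellY_add_one {k : ℕ} (ha : 2 ≤ a) (hk : k ≤ a) :
    (2 * a) ^ k ≤ 2 * pellY a (k + 1) := by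
  refine le_of_mul_le_mul_left ?_ (by lia : 0 < a)
  calc a * (2 * a) ^ k ≤ (2 * a - k) * (2 * a) ^ k := by gcongr; lia
    _ ≤ a * (2 * pellY a (k + 1)) := by linarith [sub_mul_pow_le_mul_pellY ha k]

lemma add_one_pow_lt_of_pellY_lt {c : ℤ} (hu : 1 ≤ u) (hV : 1 ≤ V) (hnu : n ≤ u) (hc : 0 ≤ c)
    (h : 2 * pellY (u * (V + 1)) (2 * n + 1) < c * pellY (2 * u ^ 2 * V) (n + 1)) :
    (V + 1) ^ (2 * n) < c * V ^ n := by
  have hb : 2 ≤ 2 * u ^ 2 * V := by nlinarith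
  have hC := pow_le_two_mul_pellY_add_one (a := u * (V + 1)) (k := 2 * n) (by nlinarith)
    (by push_cast; nlinarith)
  push_cast at hC
  refine lt_of_mul_lt_mul_left ?_ (by positivity : 0 ≤ (2 * u) ^ (2 * n))
  calc (2 * u) ^ (2 * n) * (V + 1) ^ (2 * n) = (2 * (u * (V + 1))) ^ (2 * n) :=
        (two_mul_mul_add_one_pow n u V).symm
    _ < c * pellY (2 * u ^ 2 * V) (n + 1) := hC.trans_lt h
    _ ≤ c * (2 * (2 * u ^ 2 * V)) ^ n := by gcongr; exact pellY_add_one_le_pow hb n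
    _ = (2 * u) ^ (2 * n) * (c * V ^ n) := by
        rw [two_mul_two_mul_sq_mul_pow]
        ring

lemma two_mul_sq_le_of_add_one_pow_lt (hn : 1 ≤ n) (hY : 256 ≤ Y) (hW : 1 ≤ W)
    (hV : V = 4 * W * Y) (hmu : m ≤ u) (h : (V + 1) ^ (2 * n) < 3 * m * V ^ n) :
    2 * (W * 2 ^ (2 * n + 1)) ^ 2 ≤ 4 * (u * (V + 1)) - 5 := by
  have hWV : 1024 * W ≤ V := by nlinarith
  have hV_pos : 0 < V := by lia
  have hVm : V ^ n < 3 * m := by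
    refine lt_of_mul_lt_mul_right ?_ (by positivity : 0 ≤ V ^ n)
    calc V ^ n * V ^ n = V ^ (2 * n) := by rw [two_mul, pow_add]
      _ ≤ (V + 1) ^ (2 * n) := by gcongr; exact le_add_of_nonneg_right zero_le_one
      _ < 3 * m * V ^ n := h
  have hpow : 128 * (2 * (W * 2 ^ (2 * n + 1)) ^ 2) ≤ V ^ (n + 1) :=
    calc 128 * (2 * (W * 2 ^ (2 * n + 1)) ^ 2) = W ^ 2 * (1024 * 16 ^ n) := by
          rw [mul_pow, ← pow_mul, show (2 * n + 1) * 2 = 4 * n + 2 by ring, pow_add, pow_mul]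
          norm_num
          ring
      _ ≤ W ^ (n + 1) * (1024 * 1024 ^ n) := by
          gcongr
          · lia
          · norm_num
      _ = (1024 * W) ^ (n + 1) := by
          rw [mul_pow]
          ring
      _ ≤ V ^ (n + 1) := by gcongr
  have hVu : V ^ (n + 1) ≤ 3 * (u * V) :=
    calc V ^ (n + 1) = V ^ n * V := pow_succ V n
      _ ≤ 3 * u * V := mul_le_mul_of_nonneg_right (by linarith) hV_pos.le
      _ = 3 * (u * V) := by ring
  have : 1 ≤ (W * 2 ^ (2 * n + 1)) ^ 2 :=
    one_le_pow₀ (one_le_mul_of_one_le_of_one_le hW (one_le_pow₀ one_le_two))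
  have : 0 < V ^ n := by positivity
  linarith

theorem eq_two_pow_and_eq_upperBinomSum (hn : 1 ≤ n) (hY : 256 ≤ Y) (hW : 1 ≤ W)
    (hV : V = 4 * W * Y) (hm : 1 ≤ m) (hu : 2 * (n * m) ≤ u)
    (hlt : 2 * |pellY (u * (V + 1)) (2 * n + 1) - m * pellY (2 * u ^ 2 * V) (n + 1)| <
      pellY (2 * u ^ 2 * V) (n + 1))
    (hdvd : 4 * (u * (V + 1)) - 5 ∣
      3 * W * pellY (u * (V + 1)) (2 * n + 1) - 2 * (W ^ 2 - 1)) :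
    W = 2 ^ (2 * n + 1) ∧ m = upperBinomSum n V := by
  have hn_le : (n : ℤ) ≤ n * m := le_mul_of_one_le_right (by lia) hm
  have hm_le : m ≤ n * m := le_mul_of_one_le_left (by lia) (by exact_mod_cast hn)
  have hV_pos : 1 ≤ V := by nlinarith
  have hJ_pos : 0 < pellY (2 * u ^ 2 * V) (n + 1) := pellY_pos (by nlinarith) (by lia)
  have hCJ : 2 * pellY (u * (V + 1)) (2 * n + 1) < 3 * m * pellY (2 * u ^ 2 * V) (n + 1) := by
    have := le_abs_self
      (pellY (u * (V + 1)) (2 * n + 1) - m * pellY (2 * u ^ 2 * V) (n + 1))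
    nlinarith
  have hpow := add_one_pow_lt_of_pellY_lt (by lia) hV_pos (by lia) (by lia) hCJ
  have hW_eq : W = 2 ^ (2 * n + 1) :=
    eq_two_pow_of_dvd hW (two_mul_sq_le_of_add_one_pow_lt hn hY hW hV (by lia) hpow)
      (mod_cast hdvd)
  refine ⟨hW_eq, ?_⟩
  have hZ : upperBinomSum n V ≤ 3 * m := by
    refine (lt_of_mul_lt_mul_left ?_ (by positivity : 0 ≤ V ^ n)).le
    linarith [pow_mul_upperBinomSum_le n (by lia : 0 ≤ V)]
  have hV_eq : V = 8 * 4 ^ n * Y := by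
    rw [hV, hW_eq, pow_succ, pow_mul, show (2 : ℤ) ^ 2 = 4 by norm_num]
    ring
  have hclose := four_mul_abs_pellY_sub_le hn (by lia : 1 ≤ Y) hm hu hV_eq hZ
  set C := pellY (u * (V + 1)) (2 * n + 1)
  set J := pellY (2 * u ^ 2 * V) (n + 1)
  set Z := upperBinomSum n V
  have hclose' : 4 * |C - Z * J| ≤ J := by nlinarith [abs_nonneg (C - Z * J)]
  have hmZ : |m - Z| * J < 1 * J :=
    calc |m - Z| * J = |(C - Z * J) - (C - m * J)| := by
          rw [← abs_of_pos hJ_pos, ← abs_mul, abs_of_pos hJ_pos]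
          ring_nf
      _ ≤ |C - Z * J| + |C - m * J| := abs_sub _ _
      _ < 1 * J := by linarith
  exact sub_eq_zero.mp (Int.abs_lt_one_iff.mp (lt_of_mul_lt_mul_right hmZ hJ_pos.le))

end PellSystem

/-- The unknowns of the system of Pell equations that expresses, through the estimates above, that
`W = 2 ^ (2 * X + 1)` and that `Y` divides the `X`-th central binomial coefficient. -/
@[ext]
structure PellData where
  (X Y W l h k x y : ℤ)

namespace PellData

variable {p : PellData}

/-- The argument of the binomial sums; `8 * 4 ^ X * Y` when `W = 2 ^ (2 * X + 1)`. -/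
def V (p : PellData) : ℤ := 4 * p.W * p.Y

/-- The large scaling factor of the two Pell parameters. -/
def U (p : PellData) : ℤ := (p.l ^ 2 + 1) * (p.X * p.Y)

/-- The parameter of the first Pell equation. -/
def a (p : PellData) : ℤ := p.U * (p.V + 1)

/-- The parameter of the second Pell equation. -/
def b (p : PellData) : ℤ := 2 * p.U ^ 2 * p.V

/-- The solution of the first Pell equation; its index is forced to be `2 * X + 1`. -/
def C (p : PellData) : ℤ := 2 * p.X + 1 + (p.a - 1) * p.h

/-- The solution of the second Pell equation; its index is forced to be `X + 1`. -/
def J (p : PellData) : ℤ := p.X + 1 + (p.b - 1) * p.k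

/-- The Pell conditions. The last one forces `W` to be a power of two. -/
def Holds (p : PellData) : Prop :=
  IsSquare (dfi p.a (2 * p.X + 1) p.C p.x p.y) ∧
    IsSquare ((p.b ^ 2 - 1) * p.J ^ 2 + 1) ∧
    4 * p.a - 5 ∣ 3 * p.W * p.C - 2 * (p.W ^ 2 - 1)

lemma J_modEq : p.J ≡ p.X + 1 [ZMOD p.b - 1] := by simp [J, Int.ModEq]

lemma Holds.W_pos (h : p.Holds) (hX : 1 ≤ p.X) (hY : 256 ≤ p.Y) (hW : 0 ≤ p.W) : 1 ≤ p.W := by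
  rcases hW.eq_or_lt with hW | hW
  · have hdvd := Int.le_of_dvd (by simp [← hW]) h.2.2
    simp only [a, V, U, ← hW] at hdvd
    nlinarith [mul_nonneg (sq_nonneg p.l) (mul_nonneg (by lia : 0 ≤ p.X) (by lia : 0 ≤ p.Y))]
  · exact hW

theorem Holds.eq_two_pow_and_dvd {n : ℕ} (h : p.Holds) (hX : p.X = n) (hn : 1 ≤ n)
    (hY : 256 ≤ p.Y) (hW : 0 ≤ p.W) (hl : p.l ≠ 0) (hx : p.x ≠ 0)
    (hlt : 2 * |p.C - p.l * p.J * p.Y| < |p.J|) :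
    p.W = 2 ^ (2 * n + 1) ∧ p.Y ∣ ((2 * n).choose n : ℤ) := by
  have hX1 : 1 ≤ p.X := by lia
  have hW1 := h.W_pos hX1 hY hW
  have hXY : 256 * p.X ≤ p.X * p.Y := by nlinarith
  have hl1 : 0 < p.l ^ 2 := by positivity
  have hU : 512 * p.X ≤ p.U := by rw [U]; nlinarith
  have hV : 1024 ≤ p.V := by rw [V]; nlinarith
  have ha : p.U ≤ p.a := by rw [a]; nlinarith
  have hab : p.a < p.b := by
    rw [a, b]
    nlinarith [mul_le_mul_of_nonneg_right (by lia : 512 ≤ p.U) (by nlinarith : 0 ≤ p.U * p.V)]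
  have hC : p.C = pellY p.a (2 * n + 1) :=
    hX ▸ eq_pellY_of_isSquare_dfi (by lia) (by lia) (by lia) hx rfl h.1
  have hm : 2 ≤ |p.l * p.Y| := by
    rw [abs_mul, abs_of_pos (by lia : 0 < p.Y)]
    nlinarith [Int.one_le_abs hl]
  have hJ : p.J = pellY p.b (n + 1) := by
    refine eq_pellY_of_modEq (m := p.l * p.Y) (by lia : 2 ≤ p.a) hab (by lia) hm
      (hX ▸ J_modEq) h.2.1 ?_
    rwa [← hC, mul_right_comm]
  have hJ_pos : 0 < p.J := hJ ▸ pellY_pos (by lia) (by lia)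
  have hC_pos : 0 < p.C := hC ▸ pellY_pos (by lia) (by lia)
  rw [abs_of_pos hJ_pos] at hlt
  have hl_pos : 1 ≤ p.l := by
    by_contra! hl_neg
    have hJY : p.J ≤ p.J * p.Y := le_mul_of_one_le_right hJ_pos.le (by lia)
    have : p.l * (p.J * p.Y) ≤ -1 * (p.J * p.Y) :=
      mul_le_mul_of_nonneg_right (by lia) (by lia)
    linarith [le_abs_self (p.C - p.l * p.J * p.Y)]
  obtain ⟨hW_eq, hlY⟩ := eq_two_pow_and_eq_upperBinomSum (m := p.l * p.Y) (u := p.U) (V := p.V)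
    hn hY hW1 rfl (by nlinarith)
    (by rw [U, ← hX]; linarith [mul_nonneg (sq_nonneg (p.l - 1)) (by lia : 0 ≤ p.X * p.Y)])
    (by rwa [← a, ← b, ← hC, ← hJ, mul_right_comm]) (by rw [← a, ← hC]; exact h.2.2)
  exact ⟨hW_eq, (dvd_upperBinomSum_iff (Dvd.intro_left (4 * p.W) rfl)).mp
    (hlY ▸ Dvd.intro_left p.l rfl)⟩

theorem exists_holds {n : ℕ} {Y : ℤ} (hn : 1 ≤ n) (hY : 1 ≤ Y)
    (hdvd : Y ∣ ((2 * n).choose n : ℤ)) :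
    ∃ p : PellData, p.X = n ∧ p.Y = Y ∧ p.W = 2 ^ (2 * n + 1) ∧ p.l ≠ 0 ∧ p.x ≠ 0 ∧ p.Holds ∧
      0 < p.J ∧ 4 * p.Y * |p.C - p.l * p.J * p.Y| ≤ p.J := by
  have hn' : (1 : ℤ) ≤ n := by exact_mod_cast hn
  obtain ⟨l, hl⟩ :=
    (dvd_upperBinomSum_iff (n := n) (Dvd.intro_left (4 * 2 ^ (2 * n + 1)) rfl)).mpr hdvd
  set V := 4 * 2 ^ (2 * n + 1) * Y with hV
  have hV_eq : V = 8 * 4 ^ n * Y := by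
    rw [hV, pow_succ, pow_mul, show (2 : ℤ) ^ 2 = 4 by norm_num]
    ring
  have hV_pos : 0 < V := by positivity
  have hl_pos : 1 ≤ l := by
    have := hl ▸ upperBinomSum_pos n hV_pos
    exact pos_of_mul_pos_right this (by lia)
  set u := (l ^ 2 + 1) * (n * Y)
  have hnY : 1 ≤ n * Y := one_le_mul_of_one_le_of_one_le hn' hY
  have hu_ge : 2 * (n * (l * Y)) ≤ u := by nlinarith [sq_nonneg (l - 1)]
  have hu_pos : 1 ≤ u := by nlinarith
  have ha : 2 ≤ u * (V + 1) := by nlinarith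
  have hb : 2 ≤ 2 * u ^ 2 * V := by nlinarith
  obtain ⟨h, hh⟩ := (pellY_modEq_self (Int.modEq_sub (u * (V + 1)) 1) (2 * n + 1)).symm.dvd
  obtain ⟨k, hk⟩ := (pellY_modEq_self (Int.modEq_sub (2 * u ^ 2 * V) 1) (n + 1)).symm.dvd
  obtain ⟨x, y, hx, hxy⟩ := exists_isSquare_dfi ha (by lia : (0 : ℤ) < 2 * n + 1)
  let p : PellData := ⟨n, Y, 2 ^ (2 * n + 1), l, h, k, x, y⟩
  have hC : p.C = pellY (u * (V + 1)) (2 * n + 1) := by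
    rw [C, ← add_sub_cancel (2 * (n : ℤ) + 1) (pellY _ _), hh]; rfl
  have hJ : p.J = pellY (2 * u ^ 2 * V) (n + 1) := by
    rw [J, ← add_sub_cancel ((n : ℤ) + 1) (pellY _ _), hk]; rfl
  refine ⟨p, rfl, rfl, rfl, by lia, hx, ⟨?_, ?_, ?_⟩, hJ ▸ pellY_pos hb (by lia), ?_⟩
  · rw [hC]
    exact hxy
  · rw [hJ]
    exact ⟨_, (pellX_sq _ _).symm.trans (sq _)⟩
  · rw [hC, show p.W ^ 2 = 4 ^ (2 * n + 1) from
      pow_right_comm (2 : ℤ) (2 * n + 1) 2]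
    exact_mod_cast (three_mul_two_pow_mul_pellY_modEq (u * (V + 1)) (2 * n + 1)).symm.dvd
  · rw [hC, hJ, mul_right_comm p.l, mul_comm p.l, show p.Y * p.l = _ from hl.symm]
    exact four_mul_abs_pellY_sub_le (m := l * Y) hn hY (one_le_mul_of_one_le_of_one_le hl_pos hY)
      hu_ge hV_eq (by rw [hl]; nlinarith)

end PellData

/-! ### Binary digits -/

section PopCount

/-- The number of ones in the binary expansion of `n`. -/
def popCount (n : ℕ) : ℕ := (Nat.digits 2 n).sum

lemma popCount_zero : popCount 0 = 0 := by simp [popCount]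

lemma popCount_two_mul_add (n : ℕ) {b : ℕ} (hb : b < 2) :
    popCount (2 * n + b) = popCount n + b := by
  rcases Nat.eq_zero_or_pos (2 * n + b) with h | h
  · obtain ⟨rfl, rfl⟩ : n = 0 ∧ b = 0 := by lia
    rfl
  · rw [popCount, add_comm, Nat.digits_add 2 one_lt_two b n hb (by lia), List.sum_cons, add_comm,
      popCount]

lemma popCount_two_mul (n : ℕ) : popCount (2 * n) = popCount n :=
  popCount_two_mul_add n two_pos

lemma popCount_eq_div_add_mod (n : ℕ) : popCount n = popCount (n / 2) + n % 2 := by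
  conv_lhs => rw [← Nat.div_add_mod n 2]
  exact popCount_two_mul_add _ (Nat.mod_lt _ two_pos)

lemma popCount_succ_le (n : ℕ) : popCount (n + 1) ≤ popCount n + 1 := by
  induction n using Nat.strong_induction_on with
  | _ n ih =>
    obtain ⟨k, rfl | rfl⟩ := Nat.even_or_odd' n
    · rw [popCount_two_mul_add k one_lt_two, popCount_two_mul]
    · rw [show 2 * k + 1 + 1 = 2 * (k + 1) by ring, popCount_two_mul,
        popCount_two_mul_add k one_lt_two]
      exact (ih k (by lia)).trans (Nat.le_succ _)

lemma land_two_mul_add_eq_zero_iff {m n b c : ℕ} (hb : b < 2) (hc : c < 2) :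
    (2 * m + b) &&& (2 * n + c) = 0 ↔ m &&& n = 0 ∧ b + c < 2 := by
  have hmod : ((2 * m + b) &&& (2 * n + c)) % 2 = b &&& c := by
    simpa [Nat.add_mod, Nat.mod_eq_of_lt hb, Nat.mod_eq_of_lt hc] using
      Nat.and_mod_two_pow (a := 2 * m + b) (b := 2 * n + c) (n := 1)
  have hdiv : ((2 * m + b) &&& (2 * n + c)) / 2 = m &&& n := by
    simpa [Nat.mul_add_div, Nat.div_eq_of_lt hb, Nat.div_eq_of_lt hc] using
      Nat.and_div_two_pow (a := 2 * m + b) (b := 2 * n + c) (n := 1)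
  have hbit : b &&& c = 0 ↔ b + c < 2 := by
    interval_cases b <;> interval_cases c <;> simp
  rw [← hbit, ← hmod, ← hdiv]
  lia

lemma popCount_add_le_and_iff (S T : ℕ) :
    popCount (S + T) ≤ popCount S + popCount T ∧
      (popCount S + popCount T ≤ popCount (S + T) ↔ S &&& T = 0) := by
  induction S using Nat.strong_induction_on generalizing T with
  | _ S ih =>
    rcases Nat.eq_zero_or_pos S with rfl | hS
    · simp [popCount_zero]
    obtain ⟨m, b, hb, rfl⟩ : ∃ m b, b < 2 ∧ S = 2 * m + b := ⟨S / 2, S % 2, by lia, by lia⟩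
    obtain ⟨n, c, hc, rfl⟩ : ∃ n c, c < 2 ∧ T = 2 * n + c := ⟨T / 2, T % 2, by lia, by lia⟩
    obtain ⟨hle, hiff⟩ := ih m (by lia) n
    rw [land_two_mul_add_eq_zero_iff hb hc, popCount_two_mul_add m hb, popCount_two_mul_add n hc,
      ← hiff]
    by_cases hbc : b + c < 2
    · rw [show 2 * m + b + (2 * n + c) = 2 * (m + n) + (b + c) by ring,
        popCount_two_mul_add _ hbc]
      lia
    · rw [show 2 * m + b + (2 * n + c) = 2 * (m + n + 1) by lia, popCount_two_mul]
      have := popCount_succ_le (m + n)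
      lia

lemma popCount_mul_two_pow_add {m v : ℕ} (u : ℕ) (hv : v < 2 ^ m) :
    popCount (u * 2 ^ m + v) = popCount u + popCount v := by
  induction m generalizing v with
  | zero => simp [Nat.lt_one_iff.mp hv, popCount_zero]
  | succ m ih =>
    rw [pow_succ] at hv ⊢
    rw [show u * (2 ^ m * 2) + v = 2 * (u * 2 ^ m + v / 2) + v % 2 by rw [← mul_assoc]; lia,
      popCount_two_mul_add _ (Nat.mod_lt _ two_pos), ih (by lia), popCount_eq_div_add_mod v,
      add_assoc]

lemma popCount_two_pow_sub_one_sub_add {m v : ℕ} (hv : v < 2 ^ m) :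
    popCount (2 ^ m - 1 - v) + popCount v = m := by
  induction m generalizing v with
  | zero => simp [Nat.lt_one_iff.mp hv, popCount_zero]
  | succ m ih =>
    rw [pow_succ] at hv ⊢
    have := ih (v := v / 2) (by lia)
    rw [show 2 ^ m * 2 - 1 - v = 2 * (2 ^ m - 1 - v / 2) + (1 - v % 2) by lia,
      popCount_two_mul_add _ (by lia), popCount_eq_div_add_mod v]
    lia

lemma padicValNat_two_choose_two_mul (n : ℕ) : padicValNat 2 ((2 * n).choose n) = popCount n := by
  have h := sub_one_mul_padicValNat_choose_eq_sub_sum_digits' (p := 2) (k := n) (n := n)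
  rw [← two_mul, show (Nat.digits 2 (2 * n)).sum = popCount n from popCount_two_mul n,
    ← popCount] at h
  lia

/-- The index `X` for which `N²` divides the central binomial coefficient `C(2X, X)` exactly when
the binary expansions of `S` and `T` are disjoint, for `N` a power of two exceeding `S` and `T`. -/
def landIndex (S T N : ℤ) : ℤ := (N - 1) * ((S + T + 1) * N + T + 1)

lemma landIndex_natCast {m S T : ℕ} (hS : S < 2 ^ m) (hT : T < 2 ^ m) :
    landIndex S T (2 ^ m) =
      (((S + T) * 2 ^ m + (2 ^ m - 1 - S)) * 2 ^ m + (2 ^ m - 1 - T) : ℕ) := by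
  push_cast [show 1 ≤ 2 ^ m by lia, show S ≤ 2 ^ m - 1 by lia, show T ≤ 2 ^ m - 1 by lia]
  rw [landIndex]
  ring

/-- By Kummer's theorem the exponent of `2` in `C(2X, X)` is
`popCount (S + T) + (m - popCount S) + (m - popCount T)`, and there are no carries in `S + T`
exactly when it reaches `2 m`. -/
lemma two_pow_sq_dvd_choose_iff {m S T X : ℕ} (hS : S < 2 ^ m) (hT : T < 2 ^ m)
    (hX : (X : ℤ) = landIndex S T (2 ^ m)) :
    (2 ^ m) ^ 2 ∣ (2 * X).choose X ↔ S &&& T = 0 := by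
  rw [landIndex_natCast hS hT, Nat.cast_inj] at hX
  have hpop : popCount X =
      popCount (S + T) + popCount (2 ^ m - 1 - S) + popCount (2 ^ m - 1 - T) := by
    rw [hX, popCount_mul_two_pow_add _ (by lia), popCount_mul_two_pow_add _ (by lia)]
  have hS' := popCount_two_pow_sub_one_sub_add hS
  have hT' := popCount_two_pow_sub_one_sub_add hT
  rw [← pow_mul, padicValNat_dvd_iff_le (Nat.choose_pos (by lia)).ne',
    padicValNat_two_choose_two_mul, hpop, ← (popCount_add_le_and_iff S T).2]
  lia

end PopCount

section Masks

lemma land_add_mul_two_pow_eq_zero_iff {u g M : ℕ} (K T : ℕ) (hg : g < 2 ^ u) (hM : M < 2 ^ u) :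
    (g + K * 2 ^ u) &&& (M + T * 2 ^ u) = 0 ↔ g &&& M = 0 ∧ K &&& T = 0 := by
  have hmod : ((g + K * 2 ^ u) &&& (M + T * 2 ^ u)) % 2 ^ u = g &&& M := by
    rw [Nat.and_mod_two_pow, Nat.add_mul_mod_self_right, Nat.add_mul_mod_self_right,
      Nat.mod_eq_of_lt hg, Nat.mod_eq_of_lt hM]
  have hdiv : ((g + K * 2 ^ u) &&& (M + T * 2 ^ u)) / 2 ^ u = K &&& T := by
    rw [Nat.and_div_two_pow, Nat.add_mul_div_right _ _ (by positivity),
      Nat.add_mul_div_right _ _ (by positivity), Nat.div_eq_of_lt hg, Nat.div_eq_of_lt hM,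
      zero_add, zero_add]
  rw [← hmod, ← hdiv]
  refine ⟨fun h ↦ by simp [h], fun h ↦ ?_⟩
  rw [← Nat.div_add_mod (_ &&& _) (2 ^ u), h.1, h.2, mul_zero]

lemma land_mul_two_pow_eq_zero_iff (x u t : ℕ) :
    x &&& ((2 ^ u - 1) * 2 ^ t) = 0 ↔ x / 2 ^ t % 2 ^ u = 0 := by
  have h := land_add_mul_two_pow_eq_zero_iff (x / 2 ^ t) (2 ^ u - 1)
    (Nat.mod_lt x (Nat.two_pow_pos t)) (Nat.two_pow_pos t)
  rwa [mul_comm (x / 2 ^ t), Nat.mod_add_div, zero_add, Nat.and_two_pow_sub_one_eq_mod,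
    Nat.and_zero, eq_self_iff_true, true_and] at h

lemma land_two_pow_sub_two_pow_eq_zero_iff {d v e : ℕ} (he : e ≤ v) (hd : d < 2 ^ v) :
    d &&& (2 ^ v - 2 ^ e) = 0 ↔ d < 2 ^ e := by
  have hpow : 2 ^ v = 2 ^ (v - e) * 2 ^ e := by rw [← pow_add, Nat.sub_add_cancel he]
  rw [hpow] at hd
  rw [hpow, ← Nat.sub_one_mul, land_mul_two_pow_eq_zero_iff,
    Nat.mod_eq_of_lt ((Nat.div_lt_iff_lt_mul (Nat.two_pow_pos e)).mpr hd), Nat.div_eq_zero_iff]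
  exact or_iff_right (Nat.two_pow_pos e).ne'

variable {v e k : ℕ}

lemma sum_mul_pow_lt {B : ℕ} {d : Fin k → ℕ} (hd : ∀ j, d j < B) :
    ∑ j, d j * B ^ (j : ℕ) < B ^ k := by
  have h := (finFunctionFinEquiv fun j ↦ (⟨d j, hd j⟩ : Fin B)).isLt
  rwa [finFunctionFinEquiv_apply] at h

lemma exists_eq_sum_mul_pow {B g : ℕ} (hg : g < B ^ k) :
    ∃ d : Fin k → ℕ, (∀ j, d j < B) ∧ g = ∑ j, d j * B ^ (j : ℕ) := by
  obtain ⟨d, hd⟩ := finFunctionFinEquiv.surjective (⟨g, hg⟩ : Fin (B ^ k))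
  refine ⟨fun j ↦ d j, fun j ↦ (d j).isLt, ?_⟩
  rw [← finFunctionFinEquiv_apply, hd]

lemma land_sum_eq_zero_iff {d e : Fin k → ℕ} (hd : ∀ j, d j < 2 ^ v) (he : ∀ j, e j ≤ v) :
    (∑ j, d j * (2 ^ v) ^ (j : ℕ)) &&& (∑ j, (2 ^ v - 2 ^ e j) * (2 ^ v) ^ (j : ℕ)) = 0 ↔
      ∀ j, d j < 2 ^ e j := by
  induction k with
  | zero => simp
  | succ k ih =>
    have hlt := sum_mul_pow_lt fun j : Fin k ↦ hd j.castSucc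
    have hlt' := sum_mul_pow_lt fun j : Fin k ↦
      Nat.sub_lt (Nat.two_pow_pos v) (Nat.two_pow_pos (e j.castSucc))
    simp only [Fin.sum_univ_castSucc, Fin.val_castSucc, Fin.val_last, Fin.forall_fin_succ']
    rw [← pow_mul] at hlt hlt'
    rw [← pow_mul 2 v k, land_add_mul_two_pow_eq_zero_iff _ _ hlt hlt',
      ih (fun j ↦ hd _) (fun j ↦ he _), land_two_pow_sub_two_pow_eq_zero_iff (he _) (hd _)]

variable {ι : Type*}

/-- The number whose base-`B` digits are `B - b` at the positions `p s` and `B - 1` elsewhere. -/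
noncomputable def digitMask (p : ι → Fin k) (b B : ℤ) : ℤ :=
  ∑ j, (B - Function.extend p (fun _ ↦ b) 1 j) * B ^ (j : ℕ)

lemma extend_const_zero_le (p : ι → Fin k) (he : e ≤ v) (j : Fin k) :
    Function.extend p (fun _ ↦ e) 0 j ≤ v := by
  classical
  rw [Function.extend_def]
  split_ifs
  exacts [he, v.zero_le]

lemma digitMask_two_pow (p : ι → Fin k) (he : e ≤ v) :
    digitMask p (2 ^ e) (2 ^ v) = ((∑ j, (2 ^ v - 2 ^ Function.extend p (fun _ ↦ e) 0 j) *
      (2 ^ v) ^ (j : ℕ) : ℕ) : ℤ) := by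
  rw [digitMask, Nat.cast_sum]
  refine Fintype.sum_congr _ _ fun j ↦ ?_
  rw [Nat.cast_mul, Nat.cast_sub (Nat.pow_le_pow_right two_pos (extend_const_zero_le p he j)),
    Function.apply_extend (fun n ↦ 2 ^ n), Function.apply_extend (Nat.cast (R := ℤ))]
  simp [Function.comp_def, Pi.one_def]

lemma sum_mul_pow_eq_sum_extend [Fintype ι] {p : ι → Fin k} (hp : p.Injective) (z : ι → ℕ)
    (B : ℕ) : ∑ s, z s * B ^ (p s : ℕ) = ∑ j, Function.extend p z 0 j * B ^ (j : ℕ) :=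
  Fintype.sum_of_injective p hp _ _
    (fun j hj ↦ by rw [Function.extend_apply' _ _ _ hj, Pi.zero_apply, zero_mul])
    fun s ↦ by rw [hp.extend_apply]

lemma sum_mul_pow_lt_of_injective [Fintype ι] {p : ι → Fin k} (hp : p.Injective) {z : ι → ℕ} {B : ℕ}
    (hB : 0 < B) (hz : ∀ s, z s < B) : ∑ s, z s * B ^ (p s : ℕ) < B ^ k := by
  rw [sum_mul_pow_eq_sum_extend hp]
  refine sum_mul_pow_lt fun j ↦ ?_
  by_cases hj : ∃ s, p s = j
  · obtain ⟨s, rfl⟩ := hj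
    simpa only [hp.extend_apply] using hz s
  · rwa [Function.extend_apply' _ _ _ hj]

lemma land_eq_zero_iff_of_eq_digitMask [Fintype ι] {p : ι → Fin k} (hp : p.Injective)
    (he : e ≤ v) {g M : ℕ} (hg : g < (2 ^ v) ^ k) (hM : (M : ℤ) = digitMask p (2 ^ e) (2 ^ v)) :
    g &&& M = 0 ↔ ∃ z : ι → ℕ, (∀ s, z s < 2 ^ e) ∧ g = ∑ s, z s * (2 ^ v) ^ (p s : ℕ) := by
  rw [digitMask_two_pow p he, Nat.cast_inj] at hM
  subst hM
  have hexp := extend_const_zero_le p he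
  constructor
  · intro h
    obtain ⟨d, hd, rfl⟩ := exists_eq_sum_mul_pow hg
    rw [land_sum_eq_zero_iff hd hexp] at h
    refine ⟨d ∘ p, fun s ↦ (h (p s)).trans_eq (by rw [hp.extend_apply]), ?_⟩
    refine (Fintype.sum_of_injective p hp _ _ (fun j hj ↦ ?_) fun s ↦ rfl).symm
    have hj' := h j
    rw [Function.extend_apply' _ _ _ hj, Pi.zero_apply, pow_zero, Nat.lt_one_iff] at hj'
    rw [hj', zero_mul]
  · rintro ⟨z, hz, rfl⟩
    have hlt (j) : Function.extend p z 0 j < 2 ^ Function.extend p (fun _ ↦ e) 0 j := by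
      by_cases hj : ∃ s, p s = j
      · obtain ⟨s, rfl⟩ := hj
        simpa only [hp.extend_apply] using hz s
      · simp [Function.extend_apply' _ _ _ hj]
    rw [sum_mul_pow_eq_sum_extend hp, land_sum_eq_zero_iff
      (fun j ↦ (hlt j).trans_le (Nat.pow_le_pow_right two_pos (hexp j))) hexp]
    exact hlt

end Masks

/-! ### Encoding the value of a polynomial as a digit -/

section Coding

open Finset Polynomial

lemma eq_of_sum_mul_pow_eq {n B : ℕ} {d d' : Fin n → ℕ} (hd : ∀ s, d s < B) (hd' : ∀ s, d' s < B)
    (h : ∑ s, d s * B ^ (s : ℕ) = ∑ s, d' s * B ^ (s : ℕ)) : d = d' := by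
  have heq : (fun s ↦ (⟨d s, hd s⟩ : Fin B)) = fun s ↦ ⟨d' s, hd' s⟩ :=
    finFunctionFinEquiv.injective (Fin.ext (by simpa only [finFunctionFinEquiv_apply] using h))
  funext s
  exact congrArg Fin.val (congrFun heq s)

lemma abs_coeff_sum_monomial_mul_le {ι : Type*} (t : Finset ι) (w : ι → ℕ) (c : ι → ℤ) {q : ℤ[X]}
    {K : ℤ} (hq : ∀ j, |q.coeff j| ≤ K) (j : ℕ) :
    |((∑ i ∈ t, monomial (w i) (c i)) * q).coeff j| ≤ (∑ i ∈ t, |c i|) * K := by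
  rw [sum_mul, finsetSum_coeff, sum_mul]
  refine (abs_sum_le_sum_abs _ _).trans (sum_le_sum fun i _ ↦ ?_)
  rw [← C_mul_X_pow_eq_monomial, mul_assoc, coeff_C_mul, abs_mul, coeff_X_pow_mul']
  gcongr
  split_ifs
  · exact hq _
  · exact abs_zero.trans_le ((abs_nonneg _).trans (hq 0))

lemma prod_monomial_pow {R ι : Type*} [CommSemiring R] (t : Finset ι) (w k : ι → ℕ) (y : ι → R) :
    ∏ s ∈ t, monomial (w s) (y s) ^ k s =
      monomial (∑ s ∈ t, k s * w s) (∏ s ∈ t, y s ^ k s) := by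
  simp only [← C_mul_X_pow_eq_monomial, mul_pow, ← C_pow, ← pow_mul, prod_mul_distrib,
    prod_pow_eq_pow_sum, map_prod, mul_comm (k _)]

variable {n : ℕ}

/-- The number whose base-`δ + 1` digits are the entries of the multi-index `i`. -/
def indexCode (δ : ℕ) (i : Fin n →₀ ℕ) : ℕ := ∑ s, i s * (δ + 1) ^ (s : ℕ)

/-- The factor `i! (δ - |i|)!` that turns the multinomial coefficient of `y ^ i` in
`(1 + ∑ y s) ^ δ` into `δ!`. -/
def indexWeight (δ : ℕ) (i : Fin n →₀ ℕ) : ℤ :=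
  (∏ s, (i s).factorial : ℕ) * ((δ - ∑ s, i s).factorial : ℕ)

/-- The polynomial `∑ i, i! (δ - |i|)! P_i X ^ ((δ + 1) ^ n - indexCode i)`, in which a coefficient
of `P` occurs in the degree complementary to that of the matching monomial of
`digitPoly δ y ^ δ`. -/
noncomputable def dualPoly (P : MvPolynomial (Fin n) ℤ) (δ : ℕ) : ℤ[X] :=
  ∑ i ∈ P.support, monomial ((δ + 1) ^ n - indexCode δ i) (indexWeight δ i * P.coeff i)

/-- The sum of the absolute values of the coefficients in the definition of `dualPoly P δ`. -/
def dualNorm (P : MvPolynomial (Fin n) ℤ) (δ : ℕ) : ℤ :=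
  ∑ i ∈ P.support, |indexWeight δ i * P.coeff i|

/-- The polynomial `1 + ∑ s, y s * X ^ ((δ + 1) ^ s)`, whose value at a large base stores the
entries of `y` as digits. -/
noncomputable def digitPoly (δ : ℕ) (y : Fin n → ℤ) : ℤ[X] :=
  1 + ∑ s : Fin n, monomial ((δ + 1) ^ (s : ℕ)) (y s)

lemma eval_digitPoly (δ : ℕ) (y : Fin n → ℤ) (B : ℤ) :
    (digitPoly δ y).eval B = 1 + ∑ s, y s * B ^ (δ + 1) ^ (s : ℕ) := by
  simp [digitPoly, eval_finsetSum]

lemma digitPoly_eq_sum_option (δ : ℕ) (y : Fin n → ℤ) :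
    digitPoly δ y = ∑ o : Option (Fin n),
      monomial (o.elim 0 fun s ↦ (δ + 1) ^ (s : ℕ)) (o.elim 1 y) := by
  rw [Fintype.sum_option]
  rfl

lemma digitPoly_pow (δ m : ℕ) (y : Fin n → ℤ) :
    digitPoly δ y ^ m = ∑ k ∈ piAntidiag (univ : Finset (Option (Fin n))) m,
      monomial (∑ s : Fin n, k (some s) * (δ + 1) ^ (s : ℕ))
        (Nat.multinomial univ k * ∏ s, y s ^ k (some s)) := by
  rw [digitPoly_eq_sum_option, sum_pow_eq_sum_piAntidiag]
  refine sum_congr rfl fun k _ ↦ ?_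
  rw [prod_monomial_pow, Fintype.sum_option, Fintype.prod_option, ← C_eq_natCast, C_mul_monomial]
  simp

lemma abs_coeff_dualPoly_le (P : MvPolynomial (Fin n) ℤ) (δ j : ℕ) :
    |(dualPoly P δ).coeff j| ≤ dualNorm P δ := by
  have h (j) : |(1 : ℤ[X]).coeff j| ≤ 1 := by rw [coeff_one]; split_ifs <;> simp
  simpa only [mul_one, dualPoly, dualNorm] using abs_coeff_sum_monomial_mul_le P.support _ _ h j

lemma abs_coeff_digitPoly_pow_mul_le (δ m : ℕ) {y : Fin n → ℤ} (hy : ∀ s, 0 ≤ y s) {q : ℤ[X]}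
    {K : ℤ} (hq : ∀ j, |q.coeff j| ≤ K) (j : ℕ) :
    |(digitPoly δ y ^ m * q).coeff j| ≤ (1 + ∑ s, y s) ^ m * K := by
  induction m generalizing j with
  | zero => simpa using hq j
  | succ m ih =>
    rw [pow_succ', mul_assoc, pow_succ', mul_assoc]
    nth_rw 1 [digitPoly_eq_sum_option]
    convert abs_coeff_sum_monomial_mul_le univ _ _ ih j
    simp [Fintype.sum_option, abs_of_nonneg (hy _)]

variable {δ : ℕ} {i : Fin n →₀ ℕ}

lemma lt_add_one_of_sum_le {m : ℕ} {ι : Type*} [Fintype ι] {k : ι → ℕ} (h : ∑ s, k s ≤ m) (s : ι) :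
    k s < m + 1 :=
  Nat.lt_succ_of_le ((single_le_sum (fun _ _ ↦ Nat.zero_le _) (mem_univ s)).trans h)

lemma indexCode_lt (hi : ∑ s, i s ≤ δ) : indexCode δ i < (δ + 1) ^ n :=
  sum_mul_pow_lt (lt_add_one_of_sum_le hi)

/-- Base-`δ + 1` expansions are unique, so a single term of the multinomial expansion contributes
to this coefficient. -/
lemma coeff_digitPoly_pow (y : Fin n → ℤ) (hi : ∑ s, i s ≤ δ) :
    (digitPoly δ y ^ δ).coeff (indexCode δ i) =
      Nat.multinomial univ (fun o : Option (Fin n) ↦ o.elim (δ - ∑ s, i s) i) *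
        ∏ s, y s ^ i s := by
  rw [digitPoly_pow, finsetSum_coeff, sum_eq_single fun o ↦ o.elim (δ - ∑ s, i s) i]
  · exact coeff_monomial_same _ _
  · intro k hk hne
    refine coeff_monomial_of_ne _ fun heq ↦ hne ?_
    have hsum : ∑ o, k o = δ := (mem_piAntidiag.mp hk).1
    have hdig : (fun s ↦ k (some s)) = i :=
      eq_of_sum_mul_pow_eq (fun s ↦ lt_add_one_of_sum_le hsum.le _) (lt_add_one_of_sum_le hi)
        heq.symm
    rw [Fintype.sum_option, ← hdig.symm] at hsum
    funext o
    cases o with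
    | none => exact Nat.eq_sub_of_add_eq hsum
    | some s => exact congrFun hdig s
  · intro hmem
    refine absurd (mem_piAntidiag.mpr ⟨?_, fun _ _ ↦ mem_univ _⟩) hmem
    rw [Fintype.sum_option]
    exact Nat.sub_add_cancel hi

lemma indexWeight_mul_coeff_digitPoly_pow (y : Fin n → ℤ) (hi : ∑ s, i s ≤ δ) :
    indexWeight δ i * (digitPoly δ y ^ δ).coeff (indexCode δ i) =
      δ.factorial * ∏ s, y s ^ i s := by
  have hspec := Nat.multinomial_spec univ fun o : Option (Fin n) ↦ o.elim (δ - ∑ s, i s) i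
  simp only [Fintype.prod_option, Fintype.sum_option, Option.elim_none, Option.elim_some,
    Nat.sub_add_cancel hi] at hspec
  rw [coeff_digitPoly_pow y hi, indexWeight, ← hspec]
  push_cast
  ring

lemma coeff_digitPoly_pow_mul_dualPoly {P : MvPolynomial (Fin n) ℤ} (hP : P.totalDegree ≤ δ)
    (y : Fin n → ℤ) :
    (digitPoly δ y ^ δ * dualPoly P δ).coeff ((δ + 1) ^ n) =
      δ.factorial * MvPolynomial.eval y P := by
  rw [dualPoly, mul_sum, finsetSum_coeff, MvPolynomial.eval_eq', mul_sum]
  refine sum_congr rfl fun i hi ↦ ?_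
  have hsum : ∑ s, i s ≤ δ := by
    have := (MvPolynomial.le_totalDegree hi).trans hP
    rwa [Finsupp.sum_fintype _ _ fun _ ↦ rfl] at this
  rw [← C_mul_X_pow_eq_monomial, mul_comm (digitPoly δ y ^ δ), mul_assoc, coeff_C_mul,
    coeff_X_pow_mul', if_pos (Nat.sub_le _ _), Nat.sub_sub_self (indexCode_lt hsum).le]
  linear_combination P.coeff i * indexWeight_mul_coeff_digitPoly_pow y hsum

lemma natDegree_dualPoly_le (P : MvPolynomial (Fin n) ℤ) (δ : ℕ) :
    (dualPoly P δ).natDegree ≤ (δ + 1) ^ n :=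
  natDegree_sum_le_of_forall_le _ _ fun _ _ ↦ (natDegree_monomial_le _).trans (Nat.sub_le _ _)

lemma natDegree_digitPoly_le {ν : ℕ} (δ : ℕ) (y : Fin (ν + 1) → ℤ) :
    (digitPoly δ y).natDegree ≤ (δ + 1) ^ ν :=
  natDegree_add_le_of_degree_le (by simp) <|
    natDegree_sum_le_of_forall_le _ _ fun s _ ↦ (natDegree_monomial_le _).trans
      (Nat.pow_le_pow_right δ.succ_pos (Nat.lt_succ_iff.mp s.isLt))

lemma natDegree_digitPoly_pow_mul_dualPoly_le {ν : ℕ} (P : MvPolynomial (Fin (ν + 1)) ℤ) (δ : ℕ)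
    (y : Fin (ν + 1) → ℤ) :
    (digitPoly δ y ^ δ * dualPoly P δ).natDegree ≤ (2 * δ + 1) * (δ + 1) ^ ν :=
  (natDegree_mul_le_of_le (natDegree_pow_le_of_le δ (natDegree_digitPoly_le δ y))
    (natDegree_dualPoly_le P δ)).trans_eq (by ring)

end Coding

section Digits

open Finset

variable {k : ℕ}

lemma sum_mul_pow_div_pow_mod {B : ℕ} {d : Fin k → ℕ} (hd : ∀ j, d j < B) (i : Fin k) :
    (∑ j, d j * B ^ (j : ℕ)) / B ^ (i : ℕ) % B = d i := by
  rw [← finFunctionFinEquiv_apply fun j ↦ (⟨d j, hd j⟩ : Fin B),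
    ← finFunctionFinEquiv_symm_apply_val, Equiv.symm_apply_apply]

lemma sum_mul_pow_nonneg_and_lt {B : ℤ} {d : Fin k → ℤ} (hd : ∀ j, 0 ≤ d j ∧ d j < B) (hB : 0 ≤ B) :
    0 ≤ ∑ j, d j * B ^ (j : ℕ) ∧ ∑ j, d j * B ^ (j : ℕ) < B ^ k := by
  lift B to ℕ using hB
  lift d to Fin k → ℕ using fun j ↦ (hd j).1
  have hlt := sum_mul_pow_lt fun j ↦ Int.ofNat_lt.mp (hd j).2
  exact ⟨by positivity, by push_cast at hlt ⊢; exact_mod_cast hlt⟩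

/-- In base `2 ^ (v + 1)`, adding `2 ^ v` to all digits makes the signed digits `c j`
nonnegative. -/
lemma land_digit_eq_zero_iff {v : ℕ} {c : Fin k → ℤ} (hc : ∀ j, |c j| < 2 ^ v) {x : ℕ}
    (hx : (x : ℤ) = ∑ j, (c j + 2 ^ v) * (2 ^ (v + 1)) ^ (j : ℕ) + (2 ^ (v + 1)) ^ k) (i : Fin k) :
    x &&& ((2 ^ v - 1) * (2 ^ (v + 1)) ^ (i : ℕ)) = 0 ↔ c i = 0 := by
  obtain ⟨d, hd⟩ : ∃ d : Fin k → ℕ, ∀ j, (d j : ℤ) = c j + 2 ^ v :=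
    ⟨fun j ↦ (c j + 2 ^ v).toNat, fun j ↦ Int.toNat_of_nonneg (by linarith [abs_lt.mp (hc j)])⟩
  have hlt (j) : d j < 2 ^ (v + 1) := by
    zify
    rw [hd, pow_succ]
    linarith [(abs_lt.mp (hc j)).2]
  have hxd : x = ∑ j, d j * (2 ^ (v + 1)) ^ (j : ℕ) + (2 ^ (v + 1)) ^ k := by
    zify
    simpa only [hd] using hx
  have hdigit : x / (2 ^ (v + 1)) ^ (i : ℕ) % 2 ^ (v + 1) = d i := by
    obtain ⟨m, hm⟩ := Nat.exists_eq_add_of_lt i.isLt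
    have hpow : (2 ^ (v + 1)) ^ k =
        (2 ^ (v + 1)) ^ (i : ℕ) * ((2 ^ (v + 1)) ^ m * 2 ^ (v + 1)) := by
      rw [← pow_succ, ← pow_add, ← add_assoc, ← hm]
    rw [hxd, hpow, Nat.add_mul_div_left _ _ (by positivity), Nat.add_mul_mod_self_right,
      sum_mul_pow_div_pow_mod hlt]
  rw [← pow_mul, land_mul_two_pow_eq_zero_iff, pow_mul,
    ← Nat.mod_mod_of_dvd _ (pow_dvd_pow 2 v.le_succ), hdigit, ← Nat.dvd_iff_mod_eq_zero,
    ← Int.natCast_dvd_natCast, hd, Nat.cast_pow, Nat.cast_ofNat, dvd_add_self_right]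
  exact ⟨fun h ↦ Int.eq_zero_of_abs_lt_dvd h (hc i), fun h ↦ h ▸ dvd_zero _⟩

variable {ι : Type*} {p : ι → Fin k} {b B : ℤ}

lemma digitMask_nonneg_and_lt (hb : 1 ≤ b) (hbB : b ≤ B) :
    0 ≤ digitMask p b B ∧ digitMask p b B < B ^ k := by
  refine sum_mul_pow_nonneg_and_lt (fun j ↦ ?_) (by linarith)
  classical
  rw [Function.extend_def, Pi.one_apply]
  split_ifs <;> constructor <;> linarith

end Digits

section Codes

open Finset Polynomial

/-- The number of digits of a code `g` of `ν` natural numbers. -/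
def codeLength (ν δ : ℕ) : ℕ := (δ + 1) ^ ν + 1

/-- The number of digits, up to a leading `1`, of the code of the value of a polynomial. -/
def valueLength (ν δ : ℕ) : ℕ := (2 * δ + 1) * codeLength ν δ

/-- The position of the digit that stores the `s`-th unknown in a code. -/
def codePos (ν δ : ℕ) (s : Fin ν) : Fin (codeLength ν δ) :=
  ⟨(δ + 1) ^ (s + 1 : ℕ), Nat.lt_succ_of_le (Nat.pow_le_pow_right δ.succ_pos s.isLt)⟩

/-- The position of the digit that stores the value of a polynomial. -/
def valuePos (ν δ : ℕ) : Fin (valueLength ν δ) :=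
  ⟨(δ + 1) ^ (ν + 1), by rw [valueLength, codeLength]; ring_nf; lia⟩

variable {ν : ℕ} (P : MvPolynomial (Fin (ν + 1)) ℤ) (δ : ℕ)

/-- The number whose base-`2 * H` digits, reduced by `H`, are the coefficients of
`digitPoly δ y ^ δ * dualPoly P δ` when `g` is the code of the last `ν` entries of `y` and `a` is
the first one. -/
noncomputable def valueCode (a g H : ℤ) : ℤ :=
  (1 + a * (2 * H) + g) ^ δ * (dualPoly P δ).eval (2 * H) +
    ∑ j : Fin (valueLength ν δ), H * (2 * H) ^ (j : ℕ) + (2 * H) ^ valueLength ν δ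

/-- The first of the two numbers (called `S` in the literature) whose binary digits are disjoint if
and only if `g` is the code of a solution. -/
noncomputable def leftCode (a g H : ℤ) : ℤ := g + valueCode P δ a g H * (2 * H) ^ codeLength ν δ

/-- The second of the two numbers (called `T` in the literature) whose binary digits are disjoint if
and only if `g` is the code of a solution, where `b` bounds the unknowns. -/
noncomputable def rightCode (ν δ : ℕ) (b H : ℤ) : ℤ :=
  digitMask (codePos ν δ) b (2 * H) +
    (H - 1) * (2 * H) ^ (valuePos ν δ : ℕ) * (2 * H) ^ codeLength ν δ

/-- A power of `2 * H` that exceeds `leftCode` and `rightCode`. -/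
def codeModulus (ν δ : ℕ) (H : ℤ) : ℤ := (2 * H) ^ (codeLength ν δ + valueLength ν δ + 2)

variable {P δ} {a b g H : ℤ}

lemma abs_eval_dualPoly_le {n : ℕ} (P : MvPolynomial (Fin n) ℤ) (δ : ℕ) {B : ℤ} (hB : 1 ≤ B) :
    |(dualPoly P δ).eval B| ≤ dualNorm P δ * B ^ (δ + 1) ^ n := by
  have hB0 : 0 ≤ B := by linarith
  rw [dualPoly, dualNorm, eval_finsetSum, sum_mul]
  refine (abs_sum_le_sum_abs _ _).trans (sum_le_sum fun i _ ↦ ?_)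
  rw [eval_monomial, abs_mul, abs_of_nonneg (pow_nonneg hB0 _)]
  gcongr
  exact Nat.sub_le _ _

lemma abs_pow_mul_eval_dualPoly_le (ha : 0 ≤ a) (haH : a < 2 * H) (hH : 2 ≤ H)
    (hP : dualNorm P δ ≤ 2 * H) (hg : 0 ≤ g) (hgH : g < (2 * H) ^ codeLength ν δ) :
    |(1 + a * (2 * H) + g) ^ δ * (dualPoly P δ).eval (2 * H)| ≤ (2 * H) ^ valueLength ν δ := by
  have hB : 4 ≤ 2 * H := by linarith
  generalize 2 * H = B at *
  have hcode : 1 + a * B + g ≤ B ^ (codeLength ν δ + 1) := by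
    have hsq : B ^ 2 ≤ B ^ codeLength ν δ :=
      pow_le_pow_right₀ (by linarith) (Nat.succ_le_succ (Nat.one_le_pow _ _ δ.succ_pos))
    rw [pow_succ]
    nlinarith
  have hdual : |(dualPoly P δ).eval B| ≤ B ^ ((δ + 1) ^ (ν + 1) + 1) := by
    rw [pow_succ, mul_comm]
    exact (abs_eval_dualPoly_le P δ (by linarith)).trans (by gcongr)
  calc |(1 + a * B + g) ^ δ * (dualPoly P δ).eval B|
      = (1 + a * B + g) ^ δ * |(dualPoly P δ).eval B| := by
        rw [abs_mul, abs_of_nonneg (by positivity)]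
    _ ≤ (B ^ (codeLength ν δ + 1)) ^ δ * B ^ ((δ + 1) ^ (ν + 1) + 1) := by gcongr
    _ = B ^ valueLength ν δ := by
        rw [← pow_mul, ← pow_add, valueLength, codeLength]
        congr 1
        ring

lemma valueCode_nonneg_and_lt (ha : 0 ≤ a) (haH : a < 2 * H) (hH : 2 ≤ H)
    (hP : dualNorm P δ ≤ 2 * H) (hg : 0 ≤ g) (hgH : g < (2 * H) ^ codeLength ν δ) :
    0 ≤ valueCode P δ a g H ∧ valueCode P δ a g H < (2 * H) ^ (valueLength ν δ + 2) := by
  obtain ⟨hlow, hupp⟩ := abs_le.mp (abs_pow_mul_eval_dualPoly_le ha haH hH hP hg hgH)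
  obtain ⟨hsum, hsum'⟩ := sum_mul_pow_nonneg_and_lt (k := valueLength ν δ)
    (fun _ ↦ ⟨by linarith, by linarith⟩ : ∀ _, 0 ≤ H ∧ H < 2 * H) (by linarith)
  have hpow : 3 * (2 * H) ^ valueLength ν δ ≤ (2 * H) ^ (valueLength ν δ + 2) := by
    rw [pow_add, mul_comm]
    gcongr
    nlinarith
  rw [valueCode]
  constructor <;> linarith

lemma leftCode_nonneg_and_lt (ha : 0 ≤ a) (haH : a < 2 * H) (hH : 2 ≤ H)
    (hP : dualNorm P δ ≤ 2 * H) (hg : 0 ≤ g) (hgH : g < (2 * H) ^ codeLength ν δ) :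
    0 ≤ leftCode P δ a g H ∧ leftCode P δ a g H < codeModulus ν δ H := by
  obtain ⟨hnonneg, hlt⟩ := valueCode_nonneg_and_lt ha haH hH hP hg hgH
  have hpos : 0 < (2 * H) ^ codeLength ν δ := by positivity
  have hmul := mul_le_mul_of_nonneg_right (Int.add_one_le_of_lt hlt) hpos.le
  rw [leftCode, codeModulus, add_assoc, pow_add]
  constructor
  · positivity
  · linarith

lemma rightCode_nonneg_and_lt (hb : 1 ≤ b) (hbH : b ≤ 2 * H) (hH : 2 ≤ H) :
    0 ≤ rightCode ν δ b H ∧ rightCode ν δ b H < codeModulus ν δ H := by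
  obtain ⟨hnonneg, hlt⟩ := digitMask_nonneg_and_lt (p := codePos ν δ) hb hbH
  have hpow : (2 * H) ^ (valuePos ν δ : ℕ) * (2 * H) ≤ (2 * H) ^ (valueLength ν δ + 2) := by
    rw [← pow_succ]
    exact pow_le_pow_right₀ (by linarith) (by have := (valuePos ν δ).isLt; lia)
  have hpos : 0 < (2 * H) ^ codeLength ν δ := by positivity
  have hH1 : 0 ≤ H - 1 := by linarith
  have hmul := mul_le_mul_of_nonneg_right hpow hpos.le
  have hone : 1 ≤ (2 * H) ^ (valuePos ν δ : ℕ) := one_le_pow₀ (by linarith)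
  rw [rightCode, codeModulus, add_assoc, pow_add]
  constructor
  · positivity
  · linarith [le_mul_of_one_le_left hpos.le hone,
      mul_nonneg (by linarith : 0 ≤ H) (mul_nonneg (zero_le_one.trans hone) hpos.le)]

lemma sixteen_le_codeModulus (hH : 2 ≤ H) : 16 ≤ codeModulus ν δ H :=
  calc (16 : ℤ) ≤ (2 * H) ^ 2 := by nlinarith
    _ ≤ _ := pow_le_pow_right₀ (by linarith) (Nat.le_add_left _ _)

lemma pow_codeLength_le_codeModulus (hH : 1 ≤ H) :
    (2 * H) ^ codeLength ν δ ≤ codeModulus ν δ H :=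
  pow_le_pow_right₀ (by linarith) (by lia)

end Codes

section Decoding

open Finset Polynomial

variable {ν : ℕ} {P : MvPolynomial (Fin (ν + 1)) ℤ} {δ a : ℕ} {z : Fin ν → ℕ}

lemma codePos_injective (hδ : 1 ≤ δ) : (codePos ν δ).Injective := fun s t h ↦
  Fin.ext (Nat.succ_injective (Nat.pow_right_injective (by lia) (congrArg Fin.val h)))

/-- The natural number `a` followed by `z`, as integers. -/
def consVec (a : ℕ) (z : Fin ν → ℕ) : Fin (ν + 1) → ℤ := Fin.cons a fun s ↦ z s

lemma eval_digitPoly_consVec (δ a : ℕ) (z : Fin ν → ℕ) (B : ℤ) :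
    (digitPoly δ (consVec a z)).eval B = 1 + a * B + ∑ s, z s * B ^ (codePos ν δ s : ℕ) := by
  rw [eval_digitPoly, Fin.sum_univ_succ, ← add_assoc]
  simp [consVec, codePos]

/-- The coefficients of `digitPoly δ y ^ δ * dualPoly P δ`, the signed digits of `valueCode`. -/
noncomputable def valueDigit (P : MvPolynomial (Fin (ν + 1)) ℤ) (δ a : ℕ) (z : Fin ν → ℕ) (j : ℕ) :
    ℤ :=
  (digitPoly δ (consVec a z) ^ δ * dualPoly P δ).coeff j

lemma valueCode_eq_sum (P : MvPolynomial (Fin (ν + 1)) ℤ) (δ a : ℕ) (z : Fin ν → ℕ) (H : ℤ) :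
    valueCode P δ a (∑ s, z s * (2 * H) ^ (codePos ν δ s : ℕ)) H =
      ∑ j : Fin (valueLength ν δ), (valueDigit P δ a z j + H) * (2 * H) ^ (j : ℕ) +
        (2 * H) ^ valueLength ν δ := by
  have hdeg : (digitPoly δ (consVec a z) ^ δ * dualPoly P δ).natDegree < valueLength ν δ :=
    (natDegree_digitPoly_pow_mul_dualPoly_le P δ _).trans_lt
      (mul_lt_mul_of_pos_left (Nat.lt_succ_self _) (Nat.succ_pos _))
  rw [valueCode, ← eval_digitPoly_consVec, ← eval_pow, ← eval_mul, eval_eq_sum_range' hdeg,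
    sum_range, ← sum_add_distrib]
  simp only [valueDigit, add_mul]

lemma abs_valueDigit_lt {e ρ : ℕ} (hρ : dualNorm P δ * (ν + 2) ^ δ < 2 ^ ρ) (ha : a < 2 ^ e)
    (hz : ∀ s, z s < 2 ^ e) (j : ℕ) : |valueDigit P δ a z j| < 2 ^ (ρ + e * δ) := by
  have hy (s) : 0 ≤ consVec a z s := by
    cases s using Fin.cases <;> simp [consVec]
  have hnorm : 0 ≤ dualNorm P δ := sum_nonneg fun _ _ ↦ abs_nonneg _
  have hsum : 1 + ∑ s, consVec a z s ≤ (ν + 2) * 2 ^ e := by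
    have hle : ∑ s, z s ≤ ν * 2 ^ e := by
      simpa using sum_le_card_nsmul univ z _ fun s _ ↦ (hz s).le
    have hone := Nat.one_le_two_pow (n := e)
    simp only [consVec, Fin.sum_univ_succ, Fin.cons_zero, Fin.cons_succ]
    zify at *
    linarith
  calc |valueDigit P δ a z j|
      ≤ (1 + ∑ s, consVec a z s) ^ δ * dualNorm P δ :=
        abs_coeff_digitPoly_pow_mul_le δ δ hy (abs_coeff_dualPoly_le P δ) j
    _ ≤ ((ν + 2) * 2 ^ e) ^ δ * dualNorm P δ := by
        have := sum_nonneg fun s (_ : s ∈ univ) ↦ hy s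
        gcongr
    _ = dualNorm P δ * (ν + 2) ^ δ * 2 ^ (e * δ) := by rw [mul_pow, pow_mul]; ring
    _ < 2 ^ ρ * 2 ^ (e * δ) := by gcongr
    _ = 2 ^ (ρ + e * δ) := (pow_add _ _ _).symm

lemma land_valueCode_eq_zero_iff (hP : P.totalDegree ≤ δ) {v K : ℕ}
    (hdig : ∀ j, |valueDigit P δ a z j| < 2 ^ v)
    (hK : (K : ℤ) = valueCode P δ a (∑ s, z s * (2 * 2 ^ v) ^ (codePos ν δ s : ℕ)) (2 ^ v)) :
    K &&& ((2 ^ v - 1) * (2 ^ (v + 1)) ^ (valuePos ν δ : ℕ)) = 0 ↔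
      MvPolynomial.eval (consVec a z) P = 0 := by
  rw [valueCode_eq_sum, ← pow_succ'] at hK
  rw [land_digit_eq_zero_iff (fun j ↦ hdig j) hK, valueDigit, valuePos,
    coeff_digitPoly_pow_mul_dualPoly hP, mul_eq_zero,
    or_iff_right (Nat.cast_ne_zero.mpr δ.factorial_ne_zero)]

lemma le_and_dualNorm_le_two_pow_mul_pow {ρ : ℕ} (hδ : 1 ≤ δ)
    (hρ : dualNorm P δ * (ν + 2) ^ δ < 2 ^ ρ) {b : ℤ} (hb : 1 ≤ b) :
    b ≤ 2 ^ ρ * b ^ δ ∧ dualNorm P δ ≤ 2 ^ ρ * b ^ δ := by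
  have hnorm : 0 ≤ dualNorm P δ := sum_nonneg fun _ _ ↦ abs_nonneg _
  constructor
  · exact (le_self_pow₀ hb (by lia)).trans
      (le_mul_of_one_le_left (by positivity) (one_le_pow₀ one_le_two))
  · calc dualNorm P δ ≤ dualNorm P δ * (ν + 2) ^ δ :=
          le_mul_of_one_le_right hnorm (one_le_pow₀ (by linarith))
      _ ≤ 2 ^ ρ := hρ.le
      _ ≤ 2 ^ ρ * b ^ δ := le_mul_of_one_le_right (by positivity) (one_le_pow₀ hb)

lemma exists_valueCode_eq_natCast {e ρ g : ℕ} (hδ : 1 ≤ δ)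
    (hρ : dualNorm P δ * (ν + 2) ^ δ < 2 ^ ρ) (he : 1 ≤ e) (ha : a < 2 ^ e)
    (hg : (g : ℤ) < (2 * 2 ^ (ρ + e * δ)) ^ codeLength ν δ) :
    ∃ K : ℕ, valueCode P δ a g (2 ^ (ρ + e * δ)) = K := by
  have he2 : (2 : ℤ) ≤ 2 ^ e := le_self_pow₀ one_le_two (by lia)
  obtain ⟨heH, hnorm⟩ := le_and_dualNorm_le_two_pow_mul_pow hδ hρ (one_le_two.trans he2)
  rw [← pow_mul, ← pow_add] at heH hnorm
  zify at ha
  exact Int.eq_ofNat_of_zero_le (valueCode_nonneg_and_lt (P := P) a.cast_nonneg (by linarith)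
    (he2.trans heH) (by linarith) g.cast_nonneg hg).1

/-- The low digits of `g &&& _` say that `g` is a code; the remaining ones that the coded vector is
a zero of `P`. -/
theorem land_eq_zero_iff_exists_eval_eq_zero (hδ : 1 ≤ δ) (hP : P.totalDegree ≤ δ) {e ρ g S T : ℕ}
    (hρ : dualNorm P δ * (ν + 2) ^ δ < 2 ^ ρ) (he : 1 ≤ e) (ha : a < 2 ^ e)
    (hg : (g : ℤ) < (2 * 2 ^ (ρ + e * δ)) ^ codeLength ν δ)
    (hS : (S : ℤ) = leftCode P δ a g (2 ^ (ρ + e * δ)))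
    (hT : (T : ℤ) = rightCode ν δ (2 ^ e) (2 ^ (ρ + e * δ))) :
    S &&& T = 0 ↔ ∃ z : Fin ν → ℕ, (∀ s, z s < 2 ^ e) ∧
      (g : ℤ) = ∑ s, z s * (2 * 2 ^ (ρ + e * δ)) ^ (codePos ν δ s : ℕ) ∧
      MvPolynomial.eval (consVec a z) P = 0 := by
  obtain ⟨K, hK⟩ := exists_valueCode_eq_natCast hδ hρ he ha hg
  have hev : e ≤ ρ + e * δ + 1 := by nlinarith
  obtain ⟨hmask, hmask'⟩ := digitMask_nonneg_and_lt (p := codePos ν δ) (one_le_pow₀ one_le_two)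
    ((pow_le_pow_right₀ one_le_two hev).trans_eq (pow_succ' (2 : ℤ) _))
  obtain ⟨M, hM⟩ := Int.eq_ofNat_of_zero_le hmask
  rw [leftCode, hK] at hS
  rw [rightCode, hM] at hT
  rw [hM] at hmask'
  rw [← pow_succ'] at *
  generalize hv : ρ + e * δ = v at *
  have hS' : S = g + K * 2 ^ ((v + 1) * codeLength ν δ) := by
    zify
    rw [hS, pow_mul]
  have hT' : T = M + (2 ^ v - 1) * (2 ^ (v + 1)) ^ (valuePos ν δ : ℕ) *
      2 ^ ((v + 1) * codeLength ν δ) := by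
    zify [Nat.one_le_two_pow]
    rw [hT, pow_mul]
  have hg' : g < (2 ^ (v + 1)) ^ codeLength ν δ := by exact_mod_cast hg
  have hM' : M < (2 ^ (v + 1)) ^ codeLength ν δ := by exact_mod_cast hmask'
  rw [hS', hT', land_add_mul_two_pow_eq_zero_iff _ _ (hg'.trans_eq (pow_mul _ _ _).symm)
    (hM'.trans_eq (pow_mul _ _ _).symm), land_eq_zero_iff_of_eq_digitMask (codePos_injective hδ) hev
    hg' hM.symm, ← exists_and_right]
  refine exists_congr fun z ↦ ?_
  rw [and_assoc]
  refine and_congr_right fun hz ↦ ?_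
  rw [← Int.natCast_inj]
  push_cast
  refine and_congr_right fun hgz ↦ land_valueCode_eq_zero_iff hP (fun j ↦ ?_) ?_
  · exact hv ▸ abs_valueDigit_lt hρ ha hz j
  · rw [← pow_succ', ← hgz, hK]

lemma codeModulus_two_pow (ν δ v : ℕ) : codeModulus ν δ (2 ^ v) =
    2 ^ ((v + 1) * (codeLength ν δ + valueLength ν δ + 2)) := by
  rw [codeModulus, ← pow_succ', pow_mul]

theorem codeModulus_sq_dvd_choose_iff (hδ : 1 ≤ δ) (hP : P.totalDegree ≤ δ) {e ρ g X : ℕ}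
    (hρ : dualNorm P δ * (ν + 2) ^ δ < 2 ^ ρ) (he : 1 ≤ e) (ha : a < 2 ^ e)
    (hg : (g : ℤ) < (2 * 2 ^ (ρ + e * δ)) ^ codeLength ν δ)
    (hX : (X : ℤ) = landIndex (leftCode P δ a g (2 ^ (ρ + e * δ)))
      (rightCode ν δ (2 ^ e) (2 ^ (ρ + e * δ))) (codeModulus ν δ (2 ^ (ρ + e * δ)))) :
    codeModulus ν δ (2 ^ (ρ + e * δ)) ^ 2 ∣ ((2 * X).choose X : ℤ) ↔
      ∃ z : Fin ν → ℕ, (∀ s, z s < 2 ^ e) ∧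
        (g : ℤ) = ∑ s, z s * (2 * 2 ^ (ρ + e * δ)) ^ (codePos ν δ s : ℕ) ∧
        MvPolynomial.eval (consVec a z) P = 0 := by
  have he2 : (2 : ℤ) ≤ 2 ^ e := le_self_pow₀ one_le_two (by lia)
  obtain ⟨heH, hnorm⟩ := le_and_dualNorm_le_two_pow_mul_pow hδ hρ (one_le_two.trans he2)
  rw [← pow_mul, ← pow_add] at heH hnorm
  have ha' : (a : ℤ) < 2 ^ e := by exact_mod_cast ha
  obtain ⟨hS0, hS⟩ := leftCode_nonneg_and_lt (P := P) a.cast_nonneg (by linarith [ha'])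
    (he2.trans heH) (by linarith) g.cast_nonneg hg
  obtain ⟨hT0, hT⟩ := rightCode_nonneg_and_lt (ν := ν) (δ := δ) (b := 2 ^ e) (by linarith)
    (by linarith) (he2.trans heH)
  obtain ⟨S, hSS⟩ := Int.eq_ofNat_of_zero_le hS0
  obtain ⟨T, hTT⟩ := Int.eq_ofNat_of_zero_le hT0
  rw [← land_eq_zero_iff_exists_eval_eq_zero hδ hP hρ he ha hg hSS.symm hTT.symm]
  rw [hSS, codeModulus_two_pow] at hS hX
  rw [hTT, codeModulus_two_pow] at hT
  rw [hTT] at hX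
  rw [codeModulus_two_pow, ← two_pow_sq_dvd_choose_iff (by exact_mod_cast hS)
    (by exact_mod_cast hT) hX]
  norm_cast

end Decoding

section System

/-! ### The system of conditions -/

lemma of_quadratic_sub_pos {g M J D : ℤ} (hM : 0 < M)
    (h : 0 < (g + 1) * (M - g) * J ^ 2 - 4 * M ^ 2 * D ^ 2) : 0 ≤ g ∧ g < M ∧ 2 * |D| < |J| := by
  have hpos : 0 < (g + 1) * (M - g) := by
    have : 0 ≤ 4 * M ^ 2 * D ^ 2 := by positivity
    exact pos_of_mul_pos_left (by linarith) (sq_nonneg J)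
  have hg : 0 ≤ g ∧ g < M := by constructor <;> by_contra! <;> nlinarith
  refine ⟨hg.1, hg.2, ?_⟩
  have hle : (g + 1) * (M - g) ≤ M ^ 2 := by
    rw [sq]
    exact mul_le_mul hg.2 (by linarith) (by linarith) hM.le
  have hsq : (2 * D) ^ 2 < J ^ 2 := by
    refine lt_of_mul_lt_mul_left (a := M ^ 2) ?_ (by positivity)
    nlinarith [mul_le_mul_of_nonneg_right hle (sq_nonneg J)]
  simpa only [abs_mul, abs_two] using sq_lt_sq.mp hsq

lemma quadratic_sub_pos {g M J D : ℤ} (hg : 0 ≤ g) (hgM : g < M) (h : 2 * (M * |D|) < |J|) :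
    0 < (g + 1) * (M - g) * J ^ 2 - 4 * M ^ 2 * D ^ 2 := by
  have hone : 1 ≤ (g + 1) * (M - g) := one_le_mul_of_one_le_of_one_le (by linarith) (by linarith)
  have hsq : (2 * (M * D)) ^ 2 < J ^ 2 := by
    rwa [sq_lt_sq, abs_mul, abs_mul, abs_two, abs_of_nonneg (hg.trans hgM.le)]
  nlinarith [mul_le_mul_of_nonneg_right hone (sq_nonneg J)]

lemma le_landIndex {S T N : ℤ} (hS : 0 ≤ S) (hT : 0 ≤ T) (hN : 1 ≤ N) :
    N - 1 ≤ landIndex S T N := by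
  have : 0 ≤ (S + T + 1) * N := by positivity
  exact le_mul_of_one_le_right (by linarith) (by linarith)

lemma exists_sq_eq_two_pow {q w : ℤ} {n : ℕ} (h : 2 * q ^ 2 * w ^ 2 = 2 ^ (2 * n + 1)) :
    ∃ e, q ^ 2 = 2 ^ (2 * e) := by
  have hqw : (q * w).natAbs = 2 ^ n := by
    have hsq : (q * w) ^ 2 = (2 ^ n) ^ 2 := by
      rw [← pow_mul, mul_comm n]
      linarith [pow_succ (2 : ℤ) (2 * n)]
    simpa [Int.natAbs_pow] using Int.natAbs_eq_iff_sq_eq.mpr hsq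
  obtain ⟨e, -, he⟩ := (Nat.dvd_prime_pow Nat.prime_two).mp
    (hqw ▸ Int.natAbs_mul q w ▸ dvd_mul_right _ _ : q.natAbs ∣ 2 ^ n)
  refine ⟨e, ?_⟩
  rw [← Int.natAbs_sq, he, Nat.cast_pow, ← pow_mul, mul_comm]
  rfl

lemma exists_two_pow_eq (a t : ℕ) :
    ∃ (e : ℕ) (f : ℤ), t < 2 ^ e ∧ (2 : ℤ) ^ e = 1 + 3 * (2 * a + 1) * (2 * f + 1) := by
  have hcop : Nat.Coprime 2 (3 * (2 * a + 1)) :=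
    Nat.coprime_two_left.mpr (Odd.mul (by decide) (odd_two_mul_add_one a))
  have htot := Nat.totient_pos.mpr (by lia : 0 < 3 * (2 * a + 1))
  have hmod := (Nat.ModEq.pow_totient hcop).pow (t + 1)
  rw [one_pow, ← pow_mul] at hmod
  generalize he : Nat.totient (3 * (2 * a + 1)) * (t + 1) = e at hmod
  have hte : t + 1 ≤ e := he ▸ Nat.le_mul_of_pos_left _ htot
  obtain ⟨c, hc⟩ := (Nat.modEq_iff_dvd' Nat.one_le_two_pow).mp hmod.symm
  have hpow : 2 ^ e = 1 + 3 * (2 * a + 1) * c := by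
    have := Nat.one_le_two_pow (n := e)
    lia
  have hodd : Odd c := by
    have heven : Even (1 + 3 * (2 * a + 1) * c) := hpow ▸ (Nat.even_pow.mpr ⟨even_two, by lia⟩)
    by_contra hc'
    exact (Nat.not_even_iff_odd.mpr (Even.one_add
      ((Nat.not_odd_iff_even.mp hc').mul_left (3 * (2 * a + 1))))) heven
  obtain ⟨f, rfl⟩ := hodd
  exact ⟨e, f, Nat.lt_two_pow_self.trans_le (Nat.pow_le_pow_right two_pos (by lia)), by
    exact_mod_cast hpow⟩

/-- The parameter `a` and eight of the integer unknowns of the final polynomial. -/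
structure Unknowns where
  (a f g h k l w x y : ℤ)

namespace Unknowns

variable {ν : ℕ} (P : MvPolynomial (Fin (ν + 1)) ℤ) (δ ρ : ℕ) (u : Unknowns)

/-- An integer larger than `a` in absolute value, of which `2 ^ e` is a possible value. -/
def q : ℤ := 1 + 3 * (2 * u.a + 1) * (2 * u.f + 1)

/-- The bound on the coded natural numbers. -/
def b : ℤ := u.q ^ 2

/-- Half of the base of the codes. -/
def H : ℤ := 2 ^ ρ * u.b ^ δ

/-- The bound on the code `g`. -/
def M (ν δ ρ : ℕ) (u : Unknowns) : ℤ := (2 * u.H δ ρ) ^ codeLength ν δ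

/-- The index of the central binomial coefficient that expresses the disjointness of
`leftCode` and `rightCode`. -/
noncomputable def X : ℤ :=
  landIndex (leftCode P δ u.a u.g (u.H δ ρ)) (rightCode ν δ u.b (u.H δ ρ))
    (codeModulus ν δ (u.H δ ρ))

/-- The instance of the Pell conditions. -/
noncomputable def pell : PellData :=
  ⟨u.X P δ ρ, codeModulus ν δ (u.H δ ρ) ^ 2, 2 * u.q ^ 2 * u.w ^ 2, u.l, u.h, u.k, u.x, u.y⟩

/-- The quantity whose positivity expresses all the inequalities of the system at once. -/
noncomputable def R : ℤ :=
  u.l ^ 2 * u.x ^ 2 * ((u.g + 1) * (u.M ν δ ρ - u.g) * (u.pell P δ ρ).J ^ 2 -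
    4 * u.M ν δ ρ ^ 2 *
      ((u.pell P δ ρ).C - u.l * (u.pell P δ ρ).J * (u.pell P δ ρ).Y) ^ 2)

/-- The conditions that are to be combined into one polynomial. -/
def Holds : Prop := (u.pell P δ ρ).Holds ∧ 0 < u.R P δ ρ

variable {P δ ρ u}

lemma four_le_b_and_lt (ha : 0 ≤ u.a) : 4 ≤ u.b ∧ u.a < u.b := by
  have hq : 6 * u.a + 2 ≤ |u.q| := by
    rw [le_abs, q]
    rcases le_or_gt 0 u.f with hf | hf
    · exact Or.inl (by nlinarith)
    · exact Or.inr (by nlinarith)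
  rw [b, ← sq_abs]
  constructor <;> nlinarith

lemma H_eq_two_pow {e : ℕ} (h : u.b = 2 ^ e) : u.H δ ρ = 2 ^ (ρ + e * δ) := by
  rw [H, h, ← pow_mul, ← pow_add]

variable (u) in
lemma two_le_H (hδ : 1 ≤ δ) (hρ : dualNorm P δ * (ν + 2) ^ δ < 2 ^ ρ) (ha : 0 ≤ u.a) :
    2 ≤ u.H δ ρ := by
  have hb := (four_le_b_and_lt ha).1
  have hbH := (le_and_dualNorm_le_two_pow_mul_pow hδ hρ (by linarith : 1 ≤ u.b)).1
  rw [← H] at hbH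
  linarith

lemma codeModulus_sub_one_le_X (hδ : 1 ≤ δ) (hρ : dualNorm P δ * (ν + 2) ^ δ < 2 ^ ρ)
    (ha : 0 ≤ u.a) (hg : 0 ≤ u.g) (hgM : u.g < u.M ν δ ρ) :
    codeModulus ν δ (u.H δ ρ) - 1 ≤ u.X P δ ρ := by
  obtain ⟨hb, hab⟩ := four_le_b_and_lt ha
  obtain ⟨hbH, hnorm⟩ := le_and_dualNorm_le_two_pow_mul_pow hδ hρ (by linarith : 1 ≤ u.b)
  rw [← H] at hbH hnorm
  have hH : 2 ≤ u.H δ ρ := by linarith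
  exact le_landIndex
    (leftCode_nonneg_and_lt ha (by linarith) hH (by linarith) hg hgM).1
    (rightCode_nonneg_and_lt (by linarith) (by linarith) hH).1
    ((by norm_num : (1 : ℤ) ≤ 16).trans (sixteen_le_codeModulus hH))

lemma of_R_pos (hM : 0 < u.M ν δ ρ) (h : 0 < u.R P δ ρ) :
    u.l ≠ 0 ∧ u.x ≠ 0 ∧ 0 ≤ u.g ∧ u.g < u.M ν δ ρ ∧
      2 * |(u.pell P δ ρ).C - u.l * (u.pell P δ ρ).J * (u.pell P δ ρ).Y| < |(u.pell P δ ρ).J| := by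
  refine ⟨?_, ?_, of_quadratic_sub_pos hM (pos_of_mul_pos_right h (by positivity))⟩
  · intro hl
    simp [R, hl] at h
  · intro hx
    simp [R, hx] at h

theorem Holds.exists_eval_eq_zero (hδ : 1 ≤ δ) (hP : P.totalDegree ≤ δ)
    (hρ : dualNorm P δ * (ν + 2) ^ δ < 2 ^ ρ) {a : ℕ} (ha : u.a = a) (h : u.Holds P δ ρ) :
    ∃ z : Fin ν → ℕ, MvPolynomial.eval (consVec a z) P = 0 := by
  obtain ⟨hb, hab⟩ := four_le_b_and_lt (ha ▸ a.cast_nonneg : 0 ≤ u.a)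
  have hH := u.two_le_H hδ hρ (ha ▸ a.cast_nonneg)
  have hN := sixteen_le_codeModulus (ν := ν) (δ := δ) hH
  obtain ⟨hl, hx, hg, hgM, hlt⟩ := of_R_pos (pow_pos (by linarith) _) h.2
  have hX := codeModulus_sub_one_le_X hδ hρ (ha ▸ a.cast_nonneg) hg hgM
  obtain ⟨n, hn⟩ := Int.eq_ofNat_of_zero_le (by linarith : 0 ≤ u.X P δ ρ)
  obtain ⟨hW, hdvd⟩ := h.1.eq_two_pow_and_dvd hn (by lia) (by simp only [pell]; nlinarith)
    (by simp only [pell]; positivity) hl hx hlt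
  obtain ⟨e, he⟩ := exists_sq_eq_two_pow hW
  obtain ⟨g, hgn⟩ := Int.eq_ofNat_of_zero_le hg
  have he1 : 1 ≤ 2 * e := by
    rw [Nat.one_le_iff_ne_zero]
    intro h0
    rw [b, he, h0] at hb
    norm_num at hb
  have hHe : u.H δ ρ = 2 ^ (ρ + 2 * e * δ) := H_eq_two_pow he
  have hb' : u.b = 2 ^ (2 * e) := he
  rw [ha, hb'] at hab
  rw [M, hgn, hHe] at hgM
  rw [X, ha, hgn, hb', hHe] at hn
  simp only [pell, hHe] at hdvd
  obtain ⟨z, -, -, hz⟩ := (codeModulus_sq_dvd_choose_iff hδ hP hρ he1 (by exact_mod_cast hab) hgM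
    hn.symm).mp hdvd
  exact ⟨z, hz⟩

lemma exists_sq_dvd_choose (hδ : 1 ≤ δ) (hP : P.totalDegree ≤ δ)
    (hρ : dualNorm P δ * (ν + 2) ^ δ < 2 ^ ρ) {a : ℕ} {z : Fin ν → ℕ}
    (hz : MvPolynomial.eval (consVec a z) P = 0) :
    ∃ (u : Unknowns) (e n : ℕ), u.a = a ∧ u.q = 2 ^ e ∧ 0 ≤ u.g ∧ u.g < u.M ν δ ρ ∧
      u.X P δ ρ = n ∧ codeModulus ν δ (u.H δ ρ) ^ 2 ∣ ((2 * n).choose n : ℤ) := by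
  obtain ⟨e, f, hze, hq⟩ := exists_two_pow_eq a (∑ s, z s)
  have hzs (s) : z s < 2 ^ (2 * e) :=
    ((Finset.single_le_sum (fun _ _ ↦ Nat.zero_le _) (Finset.mem_univ s)).trans_lt hze).trans_le
      (Nat.pow_le_pow_right two_pos (by lia))
  have hlt := sum_mul_pow_lt_of_injective (B := 2 * 2 ^ (ρ + 2 * e * δ)) (codePos_injective hδ)
    (by positivity) fun s ↦ (hzs s).trans_le
      ((Nat.pow_le_pow_right two_pos (by nlinarith)).trans_eq (pow_succ' 2 (ρ + 2 * e * δ)))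
  set g := ∑ s, z s * (2 * 2 ^ (ρ + 2 * e * δ)) ^ (codePos ν δ s : ℕ) with hg
  let u : Unknowns := ⟨a, f, g, 0, 0, 0, 0, 0, 0⟩
  have hqu : u.q = 2 ^ e := hq.symm
  have hbu : u.b = 2 ^ (2 * e) := by rw [b, hqu, ← pow_mul, mul_comm]
  have hHu : u.H δ ρ = 2 ^ (ρ + 2 * e * δ) := H_eq_two_pow hbu
  obtain ⟨hb, hab⟩ := four_le_b_and_lt (u := u) a.cast_nonneg
  have he : 1 ≤ 2 * e := by
    rw [Nat.one_le_iff_ne_zero]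
    intro h0
    rw [hbu, h0] at hb
    norm_num at hb
  have hgM : (g : ℤ) < (2 * 2 ^ (ρ + 2 * e * δ)) ^ codeLength ν δ := by exact_mod_cast hlt
  have hguM : u.g < u.M ν δ ρ := by rwa [M, hHu]
  have hX := codeModulus_sub_one_le_X hδ hρ (u := u) a.cast_nonneg g.cast_nonneg hguM
  have hN := sixteen_le_codeModulus (ν := ν) (δ := δ) (u.two_le_H hδ hρ a.cast_nonneg)
  obtain ⟨n, hn⟩ := Int.eq_ofNat_of_zero_le (by linarith : 0 ≤ u.X P δ ρ)
  refine ⟨u, e, n, rfl, hqu, g.cast_nonneg, hguM, hn, ?_⟩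
  have hae : (a : ℤ) < 2 ^ (2 * e) := hab.trans_eq hbu
  rw [X, hbu, hHu] at hn
  rw [hHu]
  exact (codeModulus_sq_dvd_choose_iff hδ hP hρ he (by exact_mod_cast hae) hgM hn.symm).mpr
    ⟨z, hzs, by push_cast [hg]; rfl, hz⟩

lemma le_and_one_le_of_q_eq (hδ : 1 ≤ δ) (hρ : dualNorm P δ * (ν + 2) ^ δ < 2 ^ ρ)
    (ha : 0 ≤ u.a) (hg : 0 ≤ u.g) (hgM : u.g < u.M ν δ ρ) {e n : ℕ} (hq : u.q = 2 ^ e)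
    (hn : u.X P δ ρ = n) : e ≤ n ∧ 1 ≤ n := by
  have hb := (four_le_b_and_lt ha).1
  have hbH := (le_and_dualNorm_le_two_pow_mul_pow hδ hρ (by linarith : 1 ≤ u.b)).1
  rw [← H] at hbH
  have hH := u.two_le_H hδ hρ ha
  have hN := sixteen_le_codeModulus (ν := ν) (δ := δ) hH
  have hMN := pow_codeLength_le_codeModulus (ν := ν) (δ := δ) (by linarith : 1 ≤ u.H δ ρ)
  have hX := codeModulus_sub_one_le_X hδ hρ ha hg hgM
  have hHM : 2 * u.H δ ρ ≤ (2 * u.H δ ρ) ^ codeLength ν δ :=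
    le_self_pow₀ (by linarith) (Nat.succ_ne_zero _)
  have hqb : (2 : ℤ) ^ e ≤ u.b := by
    rw [b, hq]
    exact le_self_pow₀ (one_le_pow₀ one_le_two) two_ne_zero
  have he : (e : ℤ) < 2 ^ e := by exact_mod_cast Nat.lt_two_pow_self
  constructor <;> lia

theorem exists_holds (hδ : 1 ≤ δ) (hP : P.totalDegree ≤ δ)
    (hρ : dualNorm P δ * (ν + 2) ^ δ < 2 ^ ρ) {a : ℕ} {z : Fin ν → ℕ}
    (hz : MvPolynomial.eval (consVec a z) P = 0) : ∃ u : Unknowns, u.a = a ∧ u.Holds P δ ρ := by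
  obtain ⟨u, e, n, hua, hq, hg, hgM, hn, hdvd⟩ := exists_sq_dvd_choose hδ hP hρ hz
  have ha : 0 ≤ u.a := hua ▸ a.cast_nonneg
  obtain ⟨hen, hn1⟩ := le_and_one_le_of_q_eq hδ hρ ha hg hgM hq hn
  have hH := u.two_le_H hδ hρ ha
  have hN := sixteen_le_codeModulus (ν := ν) (δ := δ) hH
  obtain ⟨p, hpX, hpY, hpW, hl, hx, hp, hJ, hD⟩ := PellData.exists_holds hn1 (by nlinarith) hdvd
  set u' : Unknowns :=
    { u with h := p.h, k := p.k, l := p.l, w := 2 ^ (n - e), x := p.x, y := p.y }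
  have hpell : u'.pell P δ ρ = p := by
    have hW : 2 * u.q ^ 2 * (2 ^ (n - e)) ^ 2 = (2 : ℤ) ^ (2 * n + 1) := by
      rw [hq, ← pow_mul, ← pow_mul, mul_assoc, ← pow_add, ← pow_succ']
      congr 1
      lia
    exact PellData.ext (hn.trans hpX.symm) hpY.symm (hW.trans hpW.symm) rfl rfl rfl rfl rfl
  refine ⟨u', hua, hpell ▸ hp, ?_⟩
  have hMY : u.M ν δ ρ ≤ p.Y := by
    have := pow_codeLength_le_codeModulus (ν := ν) (δ := δ) (by linarith : 1 ≤ u.H δ ρ)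
    rw [hpY, M]
    nlinarith
  have hlt : 2 * (u.M ν δ ρ * |p.C - p.l * p.J * p.Y|) < |p.J| := by
    have := mul_le_mul_of_nonneg_right hMY (abs_nonneg (p.C - p.l * p.J * p.Y))
    rw [abs_of_pos hJ]
    nlinarith [abs_nonneg (p.C - p.l * p.J * p.Y)]
  have hpos := quadratic_sub_pos hg hgM hlt
  rw [R, hpell]
  exact mul_pos (by positivity) hpos

end Unknowns
end System

/-! ### Degrees -/

section Degree

variable {σ R : Type*} [CommRing R] {d e : ℕ} {φ ψ : (σ → R) → R}

/-- The function `φ` is given by a polynomial of total degree at most `d`. -/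
def PolyDegreeLE (d : ℕ) (φ : (σ → R) → R) : Prop :=
  ∃ P : MvPolynomial σ R, P.totalDegree ≤ d ∧ ∀ v, MvPolynomial.eval v P = φ v

namespace PolyDegreeLE

lemma mono (hφ : PolyDegreeLE d φ) (hde : d ≤ e) : PolyDegreeLE e φ :=
  let ⟨P, hP, hPφ⟩ := hφ
  ⟨P, hP.trans hde, hPφ⟩

lemma const (c : R) : PolyDegreeLE 0 fun _ : σ → R ↦ c :=
  ⟨MvPolynomial.C c, (MvPolynomial.totalDegree_C c).le, fun _ ↦ MvPolynomial.eval_C c⟩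

lemma var [Nontrivial R] (i : σ) : PolyDegreeLE 1 fun v : σ → R ↦ v i :=
  ⟨MvPolynomial.X i, (MvPolynomial.totalDegree_X i).le, fun _ ↦ MvPolynomial.eval_X i⟩

lemma add (hφ : PolyDegreeLE d φ) (hψ : PolyDegreeLE e ψ) :
    PolyDegreeLE (max d e) fun v ↦ φ v + ψ v :=
  let ⟨P, hP, hPφ⟩ := hφ
  let ⟨Q, hQ, hQψ⟩ := hψ
  ⟨P + Q, (MvPolynomial.totalDegree_add P Q).trans (max_le_max hP hQ), fun v ↦ by simp [hPφ, hQψ]⟩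

lemma sub (hφ : PolyDegreeLE d φ) (hψ : PolyDegreeLE e ψ) :
    PolyDegreeLE (max d e) fun v ↦ φ v - ψ v :=
  let ⟨P, hP, hPφ⟩ := hφ
  let ⟨Q, hQ, hQψ⟩ := hψ
  ⟨P - Q, (MvPolynomial.totalDegree_sub P Q).trans (max_le_max hP hQ), fun v ↦ by simp [hPφ, hQψ]⟩

lemma mul (hφ : PolyDegreeLE d φ) (hψ : PolyDegreeLE e ψ) :
    PolyDegreeLE (d + e) fun v ↦ φ v * ψ v :=
  let ⟨P, hP, hPφ⟩ := hφ
  let ⟨Q, hQ, hQψ⟩ := hψ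
  ⟨P * Q, (MvPolynomial.totalDegree_mul P Q).trans (add_le_add hP hQ), fun v ↦ by simp [hPφ, hQψ]⟩

lemma pow (hφ : PolyDegreeLE d φ) (n : ℕ) : PolyDegreeLE (n * d) fun v ↦ φ v ^ n :=
  let ⟨P, hP, hPφ⟩ := hφ
  ⟨P ^ n, (MvPolynomial.totalDegree_pow P n).trans (Nat.mul_le_mul_left n hP), fun v ↦ by
    simp [hPφ]⟩

lemma sum {ι : Type*} (s : Finset ι) {F : ι → (σ → R) → R} (hF : ∀ i ∈ s, PolyDegreeLE d (F i)) :
    PolyDegreeLE d fun v ↦ ∑ i ∈ s, F i v := by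
  choose! P hP hPF using hF
  exact ⟨∑ i ∈ s, P i, MvPolynomial.totalDegree_finsetSum_le hP, fun v ↦ by
    simpa using Finset.sum_congr rfl fun i hi ↦ hPF i hi v⟩

lemma pow_of_le {k n : ℕ} (hφ : PolyDegreeLE d φ) (hkn : k ≤ n) :
    PolyDegreeLE (d * n) fun v ↦ φ v ^ k :=
  (hφ.pow k).mono (by rw [mul_comm d]; gcongr)

lemma polynomial_eval {n : ℕ} (hφ : PolyDegreeLE d φ) {p : Polynomial R} (hp : p.natDegree ≤ n) :
    PolyDegreeLE (d * n) fun v ↦ p.eval (φ v) := by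
  simp only [Polynomial.eval_eq_sum_range]
  exact sum _ fun i hi ↦
    ((const (p.coeff i)).mul (hφ.pow_of_le ((Finset.mem_range_succ_iff.mp hi).trans hp))).mono
      (by lia)

end PolyDegreeLE

end Degree

section DegreeOfSystem

open PolyDegreeLE

variable {σ : Type*}

lemma polyDegreeLE_dfi {α : ℕ} {a b C x y : (σ → ℤ) → ℤ} (ha : PolyDegreeLE α a)
    (hb : PolyDegreeLE (α + 1) b) (hC : PolyDegreeLE (α + 1) C) (hx : PolyDegreeLE 1 x)
    (hy : PolyDegreeLE 1 y) :
    PolyDegreeLE (88 * α + 64) fun v ↦ dfi (a v) (b v) (C v) (x v) (y v) := by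
  have hD : PolyDegreeLE (4 * α + 2) fun v ↦ dfiD (a v) (C v) :=
    ((((ha.pow 2).sub (const 1)).mul (hC.pow 2)).add (const 1)).mono (by lia)
  have hE : PolyDegreeLE (6 * α + 5) fun v ↦ dfiE (a v) (C v) (x v) :=
    ((((const 2).mul (hC.pow 2)).mul hD).mul hx).mono (by lia)
  have hF : PolyDegreeLE (14 * α + 10) fun v ↦ dfiF (a v) (C v) (x v) :=
    ((((ha.pow 2).sub (const 1)).mul (hE.pow 2)).add (const 1)).mono (by lia)
  have hG : PolyDegreeLE (20 * α + 14) fun v ↦ dfiG (a v) (C v) (x v) :=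
    (ha.add (hF.mul (((const 1).sub ha).add (((const 2).mul (hC.pow 2)).mul hD)))).mono (by lia)
  have hH : PolyDegreeLE (15 * α + 12) fun v ↦ dfiH (a v) (b v) (C v) (x v) (y v) :=
    (hC.add (hF.mul ((hb.sub hC).add (((const 2).mul hC).mul hy)))).mono (by lia)
  have hI : PolyDegreeLE (70 * α + 52) fun v ↦ dfiI (a v) (b v) (C v) (x v) (y v) :=
    ((((hG.pow 2).sub (const 1)).mul (hH.pow 2)).add (const 1)).mono (by lia)
  exact ((hD.mul hF).mul hI).mono (by lia)

lemma polyDegreeLE_combPoly {t : ℕ} {A₁ A₂ R S T n : (σ → ℤ) → ℤ}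
    (hA₁ : PolyDegreeLE (768 + 616 * t) A₁) (hA₂ : PolyDegreeLE (42 + 48 * t) A₂)
    (hR : PolyDegreeLE (28 + 30 * t) R) (hS : PolyDegreeLE (8 + 7 * t) S)
    (hT : PolyDegreeLE (15 + 7 * t) T) (hn : PolyDegreeLE 2 n) :
    PolyDegreeLE (12464 + 10032 * t)
      fun v ↦ combPoly (A₁ v) (A₂ v) (R v) (S v) (T v) (n v) := by
  have hX : PolyDegreeLE (1536 + 1232 * t) fun v ↦ combWeight (A₁ v) (A₂ v) :=
    (((const 1).add (hA₁.pow 2)).add (hA₂.pow 2)).mono (by lia)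
  have hQ : PolyDegreeLE (44 + 44 * t) fun v ↦ combScale (R v) (S v) :=
    ((hS.pow 2).mul (((const 2).mul hR).sub (const 1))).mono (by lia)
  have hz : PolyDegreeLE (3116 + 2508 * t)
      fun v ↦ combRoot (A₁ v) (A₂ v) (R v) (S v) (T v) (n v) :=
    ((((hS.pow 2).mul hn).add (hT.pow 2)).sub (hQ.mul ((hT.pow 2).add (hX.pow 2)))).mono (by lia)
  have hXA₂ := (hX.pow 2).mul hA₂
  exact (((hz.pow 4).sub (((const 2).mul (hz.pow 2)).mul ((hQ.pow 2).mul (hA₁.add hXA₂)))).add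
    (((hQ.pow 2).mul (hA₁.sub hXA₂)).pow 2)).mono (by lia)

/-- A bound on the degree of `codeModulus` as a polynomial in the unknowns of the system. -/
def modulusDegree (ν δ : ℕ) : ℕ := 4 * δ * (codeLength ν δ + valueLength ν δ + 2)

variable {ν δ : ℕ} {a b g H : (σ → ℤ) → ℤ}

lemma polyDegreeLE_codeModulus (hH : PolyDegreeLE (4 * δ) H) :
    PolyDegreeLE (modulusDegree ν δ) fun v ↦ codeModulus ν δ (H v) :=
  (((const 2).mul hH).pow _).mono (by rw [modulusDegree, zero_add, mul_comm])

lemma polyDegreeLE_valueCode (hδ : 1 ≤ δ) (P : MvPolynomial (Fin (ν + 1)) ℤ)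
    (ha : PolyDegreeLE 1 a) (hg : PolyDegreeLE 1 g) (hH : PolyDegreeLE (4 * δ) H) :
    PolyDegreeLE (4 * δ * valueLength ν δ) fun v ↦ valueCode P δ (a v) (g v) (H v) := by
  have hB : PolyDegreeLE (4 * δ) fun v ↦ 2 * H v := ((const 2).mul hH).mono (by lia)
  have hlead : PolyDegreeLE (4 * δ * valueLength ν δ)
      fun v ↦ (1 + a v * (2 * H v) + g v) ^ δ * (dualPoly P δ).eval (2 * H v) := by
    refine (((((const 1).add (ha.mul hB)).add hg).pow δ).mul
      (hB.polynomial_eval (natDegree_dualPoly_le P δ))).mono ?_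
    have hpow : 0 < (δ + 1) ^ ν := by positivity
    rw [valueLength, codeLength, pow_succ, Nat.max_eq_right (Nat.zero_le _),
      Nat.max_eq_left (Nat.le_add_right _ _)]
    nlinarith [mul_pos hpow hδ]
  have hdig : PolyDegreeLE (4 * δ * valueLength ν δ)
      fun v ↦ ∑ j : Fin (valueLength ν δ), H v * (2 * H v) ^ (j : ℕ) :=
    sum _ fun j _ ↦ (hH.mul (hB.pow j)).mono (by nlinarith [j.isLt])
  exact ((hlead.add hdig).add (hB.pow_of_le le_rfl)).mono (by simp)

lemma polyDegreeLE_leftCode (hδ : 1 ≤ δ) (P : MvPolynomial (Fin (ν + 1)) ℤ)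
    (ha : PolyDegreeLE 1 a) (hg : PolyDegreeLE 1 g) (hH : PolyDegreeLE (4 * δ) H) :
    PolyDegreeLE (modulusDegree ν δ) fun v ↦ leftCode P δ (a v) (g v) (H v) := by
  have hB := (const 2).mul hH
  refine (hg.add ((polyDegreeLE_valueCode hδ P ha hg hH).mul (hB.pow (codeLength ν δ)))).mono ?_
  rw [modulusDegree, max_le_iff]
  constructor <;> nlinarith

lemma polyDegreeLE_digitMask {ι : Type*} {k d : ℕ} (p : ι → Fin k) {B : (σ → ℤ) → ℤ}
    (hb : PolyDegreeLE d b) (hB : PolyDegreeLE d B) :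
    PolyDegreeLE (d * k) fun v ↦ digitMask p (b v) (B v) := by
  classical
  refine sum _ fun j _ ↦ ?_
  have hdigit : PolyDegreeLE d fun v ↦ B v - Function.extend p (fun _ ↦ b v) 1 j := by
    by_cases hj : ∃ s, p s = j
    · simpa [Function.extend_def, hj] using hB.sub hb
    · simpa [Function.extend_def, hj] using hB.sub (const 1)
  exact (hdigit.mul (hB.pow j)).mono (by nlinarith [j.isLt])

lemma polyDegreeLE_rightCode (hδ : 1 ≤ δ) (hb : PolyDegreeLE 4 b) (hH : PolyDegreeLE (4 * δ) H) :
    PolyDegreeLE (modulusDegree ν δ) fun v ↦ rightCode ν δ (b v) (H v) := by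
  have hB : PolyDegreeLE (4 * δ) fun v ↦ 2 * H v := ((const 2).mul hH).mono (by lia)
  refine ((polyDegreeLE_digitMask _ (hb.mono (by lia)) hB).add
    (((hH.sub (const 1)).mul (hB.pow (valuePos ν δ))).mul (hB.pow (codeLength ν δ)))).mono ?_
  have := (valuePos ν δ).isLt
  rw [modulusDegree, max_le_iff, Nat.max_eq_left (Nat.zero_le _)]
  constructor <;> nlinarith

lemma modulusDegree_bound (ν δ : ℕ) : 12464 + 10032 * modulusDegree ν δ ≤
    15616 + 233856 * δ + 233952 * δ * (2 * δ + 1) ^ (ν + 1) +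
      467712 * δ ^ 2 * (2 * δ + 1) ^ (ν + 1) := by
  have hle : (δ + 1) ^ ν ≤ (2 * δ + 1) ^ ν := Nat.pow_le_pow_left (by lia) ν
  have hone : 1 ≤ (δ + 1) ^ ν := Nat.one_le_pow _ _ (by lia)
  rw [modulusDegree, valueLength, codeLength, pow_succ]
  nlinarith [Nat.mul_le_mul_left δ hle, Nat.mul_le_mul_left (δ ^ 2) hle,
    Nat.mul_le_mul_left (δ ^ 2) (hone.trans hle), Nat.zero_le (δ ^ 3 * (2 * δ + 1) ^ ν)]

end DegreeOfSystem

/-! ### The universal polynomial -/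

section FinalPolynomial

open PolyDegreeLE

namespace Unknowns

/-- The relation-combining polynomial of the conditions `Unknowns.Holds`. -/
noncomputable def relation {ν : ℕ} (P : MvPolynomial (Fin (ν + 1)) ℤ) (δ ρ : ℕ) (u : Unknowns)
    (n : ℤ) : ℤ :=
  let p := u.pell P δ ρ
  combPoly (dfi p.a (2 * p.X + 1) p.C p.x p.y) ((p.b ^ 2 - 1) * p.J ^ 2 + 1) (u.R P δ ρ)
    (4 * p.a - 5) (3 * p.W * p.C - 2 * (p.W ^ 2 - 1)) n

/-- The first nine of twelve variables as unknowns of the system. -/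
def ofVec (v : Fin 12 → ℤ) : Unknowns := ⟨v 0, v 1, v 2, v 3, v 4, v 5, v 6, v 7, v 8⟩

variable {ν δ : ℕ} (P : MvPolynomial (Fin (ν + 1)) ℤ) (ρ : ℕ)

lemma exists_relation_eq_zero_iff (u : Unknowns) :
    (∃ n : ℕ, u.relation P δ ρ n = 0) ↔ u.Holds P δ ρ := by
  unfold relation
  rw [exists_combPoly_eq_zero_iff (by lia), Holds, PellData.Holds]
  tauto

lemma polyDegreeLE_q : PolyDegreeLE 2 fun v ↦ (ofVec v).q :=
  ((const 1).add (((const 3).mul (((const 2).mul (var 0)).add (const 1))).mul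
    (((const 2).mul (var 1)).add (const 1)))).mono (by lia)

lemma polyDegreeLE_H (δ : ℕ) : PolyDegreeLE (4 * δ) fun v ↦ (ofVec v).H δ ρ :=
  ((const (2 ^ ρ)).mul ((polyDegreeLE_q.pow 2).pow δ)).mono (by lia)

lemma polyDegreeLE_M (ν δ : ℕ) : PolyDegreeLE (modulusDegree ν δ) fun v ↦ (ofVec v).M ν δ ρ :=
  (((const 2).mul (polyDegreeLE_H ρ δ)).pow_of_le le_rfl).mono (by
    rw [modulusDegree, zero_add]
    gcongr
    lia)

lemma polyDegreeLE_X (hδ : 1 ≤ δ) :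
    PolyDegreeLE (3 * modulusDegree ν δ) fun v ↦ (ofVec v).X P δ ρ := by
  have hN := polyDegreeLE_codeModulus (ν := ν) (polyDegreeLE_H ρ δ)
  have hS := polyDegreeLE_leftCode hδ P (var 0) (var 2) (polyDegreeLE_H ρ δ)
  have hT := polyDegreeLE_rightCode (ν := ν) hδ (polyDegreeLE_q.pow 2) (polyDegreeLE_H ρ δ)
  exact ((hN.sub (const 1)).mul (((((hS.add hT).add (const 1)).mul hN).add hT).add
    (const 1))).mono (by lia)

lemma polyDegreeLE_pell_Y :
    PolyDegreeLE (2 * modulusDegree ν δ) fun v ↦ ((ofVec v).pell P δ ρ).Y :=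
  (polyDegreeLE_codeModulus (polyDegreeLE_H ρ δ)).pow 2

lemma polyDegreeLE_pell_W : PolyDegreeLE 6 fun v ↦ ((ofVec v).pell P δ ρ).W :=
  (((const 2).mul (polyDegreeLE_q.pow 2)).mul ((var 6).pow 2)).mono (by lia)

lemma polyDegreeLE_pell_V :
    PolyDegreeLE (6 + 2 * modulusDegree ν δ) fun v ↦ ((ofVec v).pell P δ ρ).V :=
  (((const 4).mul (polyDegreeLE_pell_W P ρ)).mul (polyDegreeLE_pell_Y P ρ)).mono (by lia)

lemma polyDegreeLE_pell_U (hδ : 1 ≤ δ) :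
    PolyDegreeLE (2 + 5 * modulusDegree ν δ) fun v ↦ ((ofVec v).pell P δ ρ).U :=
  ((((var 5).pow 2).add (const 1)).mul ((polyDegreeLE_X P ρ hδ).mul
    (polyDegreeLE_pell_Y P ρ))).mono (by lia)

lemma polyDegreeLE_pell_a (hδ : 1 ≤ δ) :
    PolyDegreeLE (8 + 7 * modulusDegree ν δ) fun v ↦ ((ofVec v).pell P δ ρ).a :=
  ((polyDegreeLE_pell_U P ρ hδ).mul ((polyDegreeLE_pell_V P ρ).add (const 1))).mono (by lia)

lemma polyDegreeLE_pell_b (hδ : 1 ≤ δ) :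
    PolyDegreeLE (10 + 12 * modulusDegree ν δ) fun v ↦ ((ofVec v).pell P δ ρ).b :=
  (((const 2).mul ((polyDegreeLE_pell_U P ρ hδ).pow 2)).mul (polyDegreeLE_pell_V P ρ)).mono
    (by lia)

lemma polyDegreeLE_pell_C (hδ : 1 ≤ δ) :
    PolyDegreeLE (9 + 7 * modulusDegree ν δ) fun v ↦ ((ofVec v).pell P δ ρ).C :=
  ((((const 2).mul (polyDegreeLE_X P ρ hδ)).add (const 1)).add
    (((polyDegreeLE_pell_a P ρ hδ).sub (const 1)).mul (var 3))).mono (by lia)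

lemma polyDegreeLE_pell_J (hδ : 1 ≤ δ) :
    PolyDegreeLE (11 + 12 * modulusDegree ν δ) fun v ↦ ((ofVec v).pell P δ ρ).J :=
  (((polyDegreeLE_X P ρ hδ).add (const 1)).add
    (((polyDegreeLE_pell_b P ρ hδ).sub (const 1)).mul (var 4))).mono (by lia)

lemma polyDegreeLE_R (hδ : 1 ≤ δ) :
    PolyDegreeLE (28 + 30 * modulusDegree ν δ) fun v ↦ (ofVec v).R P δ ρ := by
  have hM := polyDegreeLE_M ρ ν δ
  have hJ := polyDegreeLE_pell_J P ρ hδ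
  have hD := (polyDegreeLE_pell_C P ρ hδ).sub (((var 5).mul hJ).mul
    (polyDegreeLE_pell_Y (δ := δ) P ρ))
  exact ((((var 5).pow 2).mul ((var 7).pow 2)).mul
    (((((var 2).add (const 1)).mul (hM.sub (var 2))).mul (hJ.pow 2)).sub
      (((const 4).mul (hM.pow 2)).mul (hD.pow 2)))).mono (by lia)

lemma polyDegreeLE_relation (hδ : 1 ≤ δ) :
    PolyDegreeLE (12464 + 10032 * modulusDegree ν δ) fun v ↦
      (ofVec v).relation P δ ρ (v 9 ^ 2 + v 10 ^ 2 + v 11 ^ 2 + v 11) := by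
  have hW := polyDegreeLE_pell_W (δ := δ) P ρ
  have ha := polyDegreeLE_pell_a P ρ hδ
  have hb := polyDegreeLE_pell_b P ρ hδ
  have hC := polyDegreeLE_pell_C P ρ hδ
  have hJ := polyDegreeLE_pell_J P ρ hδ
  have hX := ((const 2).mul (polyDegreeLE_X P ρ hδ)).add (const 1)
  exact polyDegreeLE_combPoly
    ((polyDegreeLE_dfi ha (hX.mono (by lia)) (hC.mono (by lia)) (var 7) (var 8)).mono (by lia))
    (((((hb.pow 2).sub (const 1)).mul (hJ.pow 2)).add (const 1)).mono (by lia))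
    (polyDegreeLE_R P ρ hδ)
    ((((const 4).mul ha).sub (const 5)).mono (by lia))
    (((((const 3).mul hW).mul hC).sub ((const 2).mul ((hW.pow 2).sub (const 1)))).mono (by lia))
    ((((((var 9).pow 2).add ((var 10).pow 2)).add ((var 11).pow 2)).add (var 11)).mono (by lia))

end Unknowns

lemma sum_three_sq_add_self_nonneg (x y z : ℤ) : 0 ≤ x ^ 2 + y ^ 2 + z ^ 2 + z := by
  have hz : 0 ≤ z * (z + 1) := by
    rcases le_or_gt 0 z with hz | hz
    · positivity
    · exact mul_nonneg_of_nonpos_of_nonpos hz.le (by lia)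
  linarith [sq_nonneg x, sq_nonneg y]

theorem exists_eval_eq_zero_iff_of_polyDegreeLE {d : ℕ} {F : Unknowns → ℤ → ℤ}
    (hF : PolyDegreeLE d fun v ↦
      F (Unknowns.ofVec v) (v 9 ^ 2 + v 10 ^ 2 + v 11 ^ 2 + v 11)) :
    ∃ Q : MvPolynomial (Fin 12) ℤ, Q.totalDegree ≤ d ∧ ∀ a : ℤ,
      (∃ z : Fin 11 → ℤ, MvPolynomial.eval (Fin.cons a z) Q = 0) ↔
        ∃ (u : Unknowns) (n : ℕ), u.a = a ∧ F u n = 0 := by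
  obtain ⟨Q, hQd, hQ⟩ := hF
  refine ⟨Q, hQd, fun a ↦ ⟨fun ⟨z, hz⟩ ↦ ?_, fun ⟨u, n, hua, hn⟩ ↦ ?_⟩⟩
  · obtain ⟨n, hn⟩ := Int.eq_ofNat_of_zero_le (sum_three_sq_add_self_nonneg (z 8) (z 9) (z 10))
    refine ⟨Unknowns.ofVec (Fin.cons a z), n, rfl, ?_⟩
    rw [← hz, hQ, ← hn]
    rfl
  · obtain ⟨x, y, z, hxyz⟩ := exists_eq_sum_three_sq_add_self n
    subst hua
    refine ⟨![u.f, u.g, u.h, u.k, u.l, u.w, u.x, u.y, x, y, z], ?_⟩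
    rw [hQ, ← hn, hxyz]
    rfl

theorem exists_eval_int_eq_zero_iff {ν δ : ℕ} (hδ : 1 ≤ δ) {P : MvPolynomial (Fin (ν + 1)) ℤ}
    (hP : P.totalDegree ≤ δ) :
    ∃ Q : MvPolynomial (Fin 12) ℤ,
      Q.totalDegree ≤ 12464 + 10032 * modulusDegree ν δ ∧ ∀ a : ℕ,
        (∃ z : Fin 11 → ℤ, MvPolynomial.eval (Fin.cons (a : ℤ) z) Q = 0) ↔
          ∃ z : Fin ν → ℕ, MvPolynomial.eval (consVec a z) P = 0 := by
  obtain ⟨ρ, hρ⟩ := pow_unbounded_of_one_lt (dualNorm P δ * (ν + 2) ^ δ) one_lt_two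
  obtain ⟨Q, hQd, hQ⟩ :=
    exists_eval_eq_zero_iff_of_polyDegreeLE (Unknowns.polyDegreeLE_relation P ρ hδ)
  refine ⟨Q, hQd, fun a ↦ ?_⟩
  simp only [hQ, exists_and_left, Unknowns.exists_relation_eq_zero_iff]
  exact ⟨fun ⟨_, ha, hu⟩ ↦ hu.exists_eval_eq_zero hδ hP hρ ha,
    fun ⟨_, hz⟩ ↦ Unknowns.exists_holds hδ hP hρ hz⟩

end FinalPolynomial

end UniversalPair

/-- **Universal pairs from ℕ to ℤ.** If `(ν, δ)` is universal over `ℕ`, then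
`(11, η(ν, δ))` is universal over `ℤ`, where
`η(ν, δ) = 15616 + 233856·δ + 233952·δ·(2δ+1)^{ν+1} + 467712·δ²·(2δ+1)^{ν+1}`. -/
theorem universal_pair_nat_to_int (ν δ : ℕ) (h : IsUniversalPairNat ν δ) :
    IsUniversalPairInt 11
      (15616 + 233856 * δ + 233952 * δ * (2 * δ + 1) ^ (ν + 1)
        + 467712 * δ ^ 2 * (2 * δ + 1) ^ (ν + 1)) := by
  intro A hA
  obtain ⟨P, hP, hPA⟩ := h A hA
  rcases Nat.eq_zero_or_pos δ with rfl | hδ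
  · obtain ⟨c, rfl⟩ : ∃ c, P = MvPolynomial.C c :=
      ⟨_, MvPolynomial.totalDegree_eq_zero_iff_eq_C.mp (Nat.le_zero.mp hP)⟩
    exact ⟨MvPolynomial.C c, (MvPolynomial.totalDegree_C c).trans_le (Nat.zero_le _), fun a ↦ by
      simp [hPA]⟩
  · obtain ⟨Q, hQdeg, hQ⟩ := UniversalPair.exists_eval_int_eq_zero_iff hδ hP
    exact ⟨Q, hQdeg.trans (UniversalPair.modulusDegree_bound ν δ), fun a ↦
      (hPA a).trans (hQ a).symm⟩
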